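/- arXiv:1810.05377 — 4 statements merged into one kernel-verified Lean document; each statement's English description precedes it below -/
import Mathlib

section
/- (Radin–Sadun) Let n ≥ 1 and let α₁, …, α_n be real numbers with each α_j/π rational. Let M = A₁·A₂·⋯·A_n be the 2×2 complex matrix where A_j = Z(α_j) when j is odd and A_j = X(α_j) when j is even. If there exists a nonzero complex number λ with M = λ·I (I the 2×2 identity matrix), then either there exists j ∈ {1, …, n} such that α_j ≡ 0 (mod 2π) or α_j ≡ π (mod 2π), or there exists j ∈ {1, …, n−1} such that both α_j and α_{j+1} are congruent to π/2 or −π/2 (mod 2π). -/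
/-!
Fix an extension to `ℂ` of the 2-adic valuation. If `θ` is a rational multiple of `π` but not a
multiple of `π / 2`, then `e^{2iθ} - 1` has larger valuation than `2`, so `cos θ` and `sin θ` have
the same valuation, which exceeds `1`. Thus a rotation by such an angle strictly enlarges a vector
whose two rotated coordinates have distinct valuations. As `X(θ) = H Z(θ) H`, an alternating word
acts on the Pauli matrices by conjugation through steps of a single kind: rotate about the
`z`-axis, then apply `H`. If no angle is a multiple of `π` and no two consecutive angles are odd
multiples of `π / 2`, then these steps never take the Pauli matrix `X` to `X` or `Z`, so the word
does not commute with `X`.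
-/

/-- The green-node (Z) rotation matrix. -/
noncomputable def Zm (θ : ℝ) : Matrix (Fin 2) (Fin 2) ℂ :=
  !![1, 0; 0, Complex.exp (θ * Complex.I)]

/-- The red-node (X) rotation matrix. -/
noncomputable def Xm (θ : ℝ) : Matrix (Fin 2) (Fin 2) ℂ :=
  (1 / 2 : ℂ) •
    !![1 + Complex.exp (θ * Complex.I), 1 - Complex.exp (θ * Complex.I);
       1 - Complex.exp (θ * Complex.I), 1 + Complex.exp (θ * Complex.I)]

/-- Congruence modulo `2π`. -/
def Cong (u v : ℝ) : Prop := ∃ k : ℤ, u - v = 2 * Real.pi * k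

section Valuation

variable {K Γ : Type*} [Field K] [LinearOrderedCommGroupWithZero Γ]

theorem exists_valuation_lt_one_of_not_isUnit {R : Type*} [CommRing R] {f : R →+* K}
    (hf : Function.Injective f) {a : R} (ha : ¬ IsUnit a) :
    ∃ B : ValuationSubring K, B.valuation (f a) < 1 := by
  let e := RingEquiv.ofLeftInverse (Function.leftInverse_invFun hf)
  have hspan : Ideal.span {e a} ≠ ⊤ := by
    rwa [Ne, Ideal.span_singleton_eq_top, MulEquiv.isUnit_map]
  obtain ⟨B, -, hB⟩ := Ideal.image_subset_nonunits_valuationSubring _ hspan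
  exact ⟨B, B.mem_nonunits_iff.mp (hB ⟨e a, Ideal.mem_span_singleton_self _, rfl⟩)⟩

theorem exists_valuation_two_lt_one [CharZero K] :
    ∃ B : ValuationSubring K, B.valuation 2 < 1 := by
  have htwo : ¬ IsUnit (2 : ℤ) := by simp [Int.isUnit_iff]
  simpa using exists_valuation_lt_one_of_not_isUnit (f := Int.castRingHom K) Int.cast_injective htwo

variable {v : Valuation K Γ}

theorem valuation_eq_one_of_isOfFinOrder {u : K} (hu : IsOfFinOrder u) : v u = 1 := by
  obtain ⟨N, hN, huN⟩ := isOfFinOrder_iff_pow_eq_one.mp hu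
  exact (pow_eq_one_iff_of_nonneg zero_le hN.ne').mp (by rw [← map_pow, huN, map_one])

theorem valuation_pow_two_pow_sub_one (h2 : v 2 ≤ 1) {u : K} (hu : v (u - 1) < v 2) (k : ℕ) :
    v (u ^ 2 ^ k - 1) = v 2 ^ k * v (u - 1) := by
  induction k with
  | zero => simp
  | succ k ih =>
    have hlt : v (u ^ 2 ^ k - 1) < v 2 :=
      ih ▸ (mul_le_of_le_one_left' (pow_le_one' h2 k)).trans_lt hu
    have hadd : v (u ^ 2 ^ k + 1) = v 2 := by
      rw [show u ^ 2 ^ k + 1 = (u ^ 2 ^ k - 1) + 2 by ring, v.map_add_eq_of_lt_right hlt]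
    rw [pow_succ 2 k, pow_mul, show (u ^ 2 ^ k) ^ 2 - 1 = (u ^ 2 ^ k + 1) * (u ^ 2 ^ k - 1) by ring,
      map_mul, hadd, ih, pow_succ' (v 2), mul_assoc]

theorem eq_one_of_isOfFinOrder_of_valuation_sub_one_lt (h2 : v 2 < 1) {u : K}
    (hu : v (u - 1) < v 2) (hfin : IsOfFinOrder u) : u = 1 := by
  by_contra hne
  have hpos : 0 < v (u - 1) := (v.pos_iff).mpr (sub_ne_zero.mpr hne)
  have hanti : StrictAnti fun k : ℕ => v (u ^ 2 ^ k - 1) := by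
    simp only [valuation_pow_two_pow_sub_one h2.le hu]
    exact (pow_right_strictAnti₀ (hpos.trans hu) h2).mul_const hpos
  have hinj : Function.Injective fun k : ℕ => u ^ 2 ^ k :=
    Function.Injective.of_comp (f := fun w => v (w - 1)) hanti.injective
  have hmem (k : ℕ) : u ^ 2 ^ k ∈ (u ^ ·) '' Set.Iio (orderOf u) :=
    ⟨2 ^ k % orderOf u, Nat.mod_lt _ hfin.orderOf_pos, pow_mod_orderOf u _⟩
  exact Set.infinite_of_injective_forall_mem hinj hmem ((Set.finite_Iio _).image _)

theorem valuation_two_lt_sub_one (h2 : v 2 < 1) {u : K} (hfin : IsOfFinOrder u)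
    (hu : u ^ 2 ≠ 1) : v 2 < v (u - 1) := by
  by_contra! hle
  have hadd : v (u + 1) < 1 := by
    rw [show u + 1 = (u - 1) + 2 by ring]
    exact v.map_add_lt (hle.trans_lt h2) h2
  have hne : u - 1 ≠ 0 := fun h => hu (by linear_combination (u + 1) * h)
  have hsq : v (u ^ 2 - 1) < v 2 := by
    rw [show u ^ 2 - 1 = (u - 1) * (u + 1) by ring, map_mul]
    exact (mul_lt_of_lt_one_right ((v.pos_iff).mpr hne) hadd).trans_le hle
  exact hu (eq_one_of_isOfFinOrder_of_valuation_sub_one_lt h2 hsq hfin.pow)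

/-- The valuations of the cosine `c` and sine `s` of a rotation that enlarges generic vectors. -/
def IsExpanding (v : Valuation K Γ) (c s : K) : Prop := 1 < v c ∧ v s = v c

/-- The valuations of the cosine `c` and sine `s` of a rotation by an odd multiple of `π / 2`. -/
def IsQuarterTurn (v : Valuation K Γ) (c s : K) : Prop := c = 0 ∧ v s = 1

/-- The valuations of the cosine `c` and sine `s` of a rotation by a rational multiple of `π` that
is not an integer multiple of `π`. -/
def IsNontrivialTurn (v : Valuation K Γ) (c s : K) : Prop :=
  IsExpanding v c s ∨ IsQuarterTurn v c s

end Valuation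

section RationalAngle

variable {Γ : Type*} [LinearOrderedCommGroupWithZero Γ] {v : Valuation ℂ Γ}

theorem isExpanding_cos_sin (h2 : v 2 < 1) {θ : ℂ}
    (hfin : IsOfFinOrder (Complex.exp (θ * Complex.I)))
    (hcos : Complex.cos θ ≠ 0) (hsin : Complex.sin θ ≠ 0) :
    IsExpanding v (Complex.cos θ) (Complex.sin θ) := by
  set ζ := Complex.exp (θ * Complex.I)
  have hζ : ζ = Complex.cos θ + Complex.sin θ * Complex.I := Complex.exp_mul_I θ
  have hcs : Complex.sin θ ^ 2 + Complex.cos θ ^ 2 = 1 := Complex.sin_sq_add_cos_sq θ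
  have hadd : ζ ^ 2 + 1 = 2 * Complex.cos θ * ζ := by
    rw [hζ]; linear_combination Complex.sin θ ^ 2 * Complex.I_sq - hcs
  have hsub : ζ ^ 2 - 1 = 2 * Complex.sin θ * (Complex.I * ζ) := by
    rw [hζ]; linear_combination -Complex.sin θ ^ 2 * Complex.I_sq + hcs
  have hvζ : v ζ = 1 := valuation_eq_one_of_isOfFinOrder hfin
  have hvI : v Complex.I = 1 := valuation_eq_one_of_isOfFinOrder
    (isOfFinOrder_iff_pow_eq_one.mpr ⟨4, by norm_num, Complex.I_pow_four⟩)
  have hne : (ζ ^ 2) ^ 2 ≠ 1 := by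
    rw [← sub_ne_zero, show (ζ ^ 2) ^ 2 - 1 = (ζ ^ 2 + 1) * (ζ ^ 2 - 1) by ring, hadd, hsub]
    simp [hcos, hsin, ζ]
  have hlt : v 2 < v (ζ ^ 2 - 1) := valuation_two_lt_sub_one h2 hfin.pow hne
  have heq : v (ζ ^ 2 + 1) = v (ζ ^ 2 - 1) := by
    rw [show ζ ^ 2 + 1 = (ζ ^ 2 - 1) + 2 by ring, v.map_add_eq_of_lt_left hlt]
  have hv2 : 0 < v 2 := v.pos_iff.mpr two_ne_zero
  rw [← heq] at hlt
  simp only [hadd, hsub, map_mul, hvζ, hvI, mul_one] at heq hlt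
  exact ⟨(lt_mul_iff_one_lt_right hv2).mp hlt, (mul_left_cancel₀ hv2.ne' heq).symm⟩

theorem isQuarterTurn_cos_sin {θ : ℂ} (hcos : Complex.cos θ = 0) :
    IsQuarterTurn v (Complex.cos θ) (Complex.sin θ) := by
  have hsq : Complex.sin θ ^ 2 = 1 := by simpa [hcos] using Complex.sin_sq_add_cos_sq θ
  exact ⟨hcos, valuation_eq_one_of_isOfFinOrder
    (isOfFinOrder_iff_pow_eq_one.mpr ⟨2, two_pos, hsq⟩)⟩

theorem isOfFinOrder_exp_mul_I {θ : ℝ} (hθ : ∃ q : ℚ, θ / Real.pi = q) :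
    IsOfFinOrder (Complex.exp (θ * Complex.I)) := by
  obtain ⟨q, hq⟩ := hθ
  refine isOfFinOrder_iff_pow_eq_one.mpr ⟨2 * q.den, by positivity, ?_⟩
  rw [← Complex.exp_nat_mul, Complex.exp_eq_one_iff]
  refine ⟨q.num, ?_⟩
  have hθ : (θ : ℂ) = q * Real.pi := by
    exact_mod_cast (div_eq_iff Real.pi_ne_zero).mp hq
  have hden : (q : ℂ) * q.den = q.num := by exact_mod_cast q.mul_den_eq_num
  rw [hθ]
  push_cast
  linear_combination 2 * Real.pi * Complex.I * hden

theorem isNontrivialTurn_cos_sin (h2 : v 2 < 1) {θ : ℝ} (hθ : ∃ q : ℚ, θ / Real.pi = q)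
    (hsin : Real.sin θ ≠ 0) :
    IsNontrivialTurn v (Complex.cos θ) (Complex.sin θ) := by
  by_cases hcos : Complex.cos θ = 0
  · exact .inr (isQuarterTurn_cos_sin hcos)
  · exact .inl (isExpanding_cos_sin h2 (isOfFinOrder_exp_mul_I hθ) hcos (by exact_mod_cast hsin))

theorem cong_iff_angle_eq {u w : ℝ} : Cong u w ↔ (u : Real.Angle) = w :=
  Real.Angle.angle_eq_iff_two_pi_dvd_sub.symm

theorem sin_eq_zero_iff_cong {θ : ℝ} : Real.sin θ = 0 ↔ Cong θ 0 ∨ Cong θ Real.pi := by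
  rw [cong_iff_angle_eq, cong_iff_angle_eq, ← Real.Angle.sin_coe, Real.Angle.sin_eq_zero_iff,
    Real.Angle.coe_zero]

theorem cos_eq_zero_iff_cong {θ : ℝ} :
    Real.cos θ = 0 ↔ Cong θ (Real.pi / 2) ∨ Cong θ (-(Real.pi / 2)) := by
  rw [cong_iff_angle_eq, cong_iff_angle_eq, ← Real.Angle.cos_coe, Real.Angle.cos_eq_zero_iff,
    neg_div]

end RationalAngle

/-- Coordinates of a traceless `2 × 2` matrix in the basis of Pauli matrices; conjugation by a
one-qubit gate acts on them as a rotation. -/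
@[ext]
structure BlochVector (K : Type*) where
  x : K
  y : K
  z : K

namespace BlochVector

section Dynamics

variable {K Γ : Type*} [Field K] [LinearOrderedCommGroupWithZero Γ]

/-- The effect on Pauli coordinates of conjugation by `Z(θ) H`, where `c = cos θ` and `s = sin θ`:
a rotation about the `z`-axis, followed by `(x, y, z) ↦ (z, -y, x)`. -/
def step (c s : K) (p : BlochVector K) : BlochVector K where
  x := p.z
  y := p.x * s - p.y * c
  z := p.x * c + p.y * s

/-- A vector that the next expanding rotation is bound to enlarge, since no cancellation can occur
between the two rotated coordinates `x` and `y`. -/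
def IsUnbalanced (v : Valuation K Γ) (p : BlochVector K) : Prop :=
  v p.x ≠ v p.y ∧ v p.z ≤ max (v p.x) (v p.y) ∧ 1 ≤ max (v p.x) (v p.y)

/-- The valuation pattern of a vector right after an expanding step. -/
def IsExpanded (v : Valuation K Γ) (p : BlochVector K) : Prop :=
  v p.x < v p.y ∧ v p.z = v p.y ∧ 1 < v p.y

/-- A valuation-theoretic reason for a vector to be neither `(1, 0, 0)` nor `(0, 0, 1)`. -/
def IsOffAxis (v : Valuation K Γ) (p : BlochVector K) : Prop :=
  p.y ≠ 0 ∨ 1 < v p.x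

/-- The invariant of the orbit of `(1, 0, 0)`, where `c` is the cosine of the last angle: two
consecutive quarter turns could undo each other, so a step with `c = 0` gives a weaker bound. -/
def IsAdmissible (v : Valuation K Γ) (c : K) (p : BlochVector K) : Prop :=
  p.IsExpanded v ∨ c = 0 ∧ p.IsUnbalanced v ∧ p.IsOffAxis v

variable {v : Valuation K Γ} {c s : K} {p : BlochVector K}

theorem IsExpanded.isUnbalanced (hp : p.IsExpanded v) : p.IsUnbalanced v :=
  ⟨hp.1.ne, hp.2.1.trans_le (le_max_right _ _), hp.2.2.le.trans (le_max_right _ _)⟩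

theorem IsExpanded.isOffAxis (hp : p.IsExpanded v) : p.IsOffAxis v :=
  .inl (v.pos_iff.mp (zero_lt_one.trans hp.2.2))

theorem IsAdmissible.isOffAxis (hp : p.IsAdmissible v c) : p.IsOffAxis v :=
  hp.elim IsExpanded.isOffAxis fun h => h.2.2

theorem IsAdmissible.isUnbalanced (hp : p.IsAdmissible v c) : p.IsUnbalanced v :=
  hp.elim IsExpanded.isUnbalanced fun h => h.2.1

theorem IsUnbalanced.isExpanded_step (hp : p.IsUnbalanced v) (hcs : IsExpanding v c s) :
    (p.step c s).IsExpanded v := by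
  obtain ⟨hne, hz, hone⟩ := hp
  obtain ⟨hc, hs⟩ := hcs
  have hc0 : 0 < v c := zero_lt_one.trans hc
  have hmul : v p.x * v c ≠ v p.y * v c := fun h => hne (mul_right_cancel₀ hc0.ne' h)
  have hy : v (p.x * s - p.y * c) = max (v p.x) (v p.y) * v c := by
    rw [sub_eq_add_neg, Valuation.map_add_of_distinct_val _ (by simpa [hs] using hmul)]
    simp [hs, max_mul_mul_right]
  have hz' : v (p.x * c + p.y * s) = max (v p.x) (v p.y) * v c := by
    rw [Valuation.map_add_of_distinct_val _ (by simpa [hs] using hmul)]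
    simp [hs, max_mul_mul_right]
  have hgrow : max (v p.x) (v p.y) < max (v p.x) (v p.y) * v c :=
    lt_mul_of_one_lt_right (zero_lt_one.trans_le hone) hc
  exact ⟨hy ▸ hz.trans_lt hgrow, hz'.trans hy.symm, hy ▸ hone.trans_lt hgrow⟩

theorem IsExpanded.isAdmissible_step (hp : p.IsExpanded v) (hcs : IsQuarterTurn v c s) :
    (p.step c s).IsAdmissible v c := by
  obtain ⟨hxy, hzy, hone⟩ := hp
  obtain ⟨rfl, hs⟩ := hcs
  refine .inr ⟨rfl, ?_, .inr (hzy ▸ hone)⟩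
  simp [IsUnbalanced, step, hs, hzy, hxy.ne', hone.le]

theorem isAdmissible_step_pauliX (hcs : IsNontrivialTurn v c s) :
    (step c s ⟨1, 0, 0⟩).IsAdmissible v c := by
  rcases hcs with hexp | ⟨rfl, hs⟩
  · exact .inl (IsUnbalanced.isExpanded_step (by simp [IsUnbalanced]) hexp)
  · have hs0 : s ≠ 0 := v.ne_zero_iff.mp (hs ▸ one_ne_zero)
    exact .inr ⟨rfl, by simp [IsUnbalanced, step, hs], .inl (by simpa [step])⟩

theorem IsAdmissible.step {c' : K} (hp : p.IsAdmissible v c)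
    (hcs : IsNontrivialTurn v c' s) (hchain : c ≠ 0 ∨ c' ≠ 0) :
    (p.step c' s).IsAdmissible v c' := by
  rcases hcs with hexp | hquarter
  · exact .inl (hp.isUnbalanced.isExpanded_step hexp)
  · have hexpanded : p.IsExpanded v :=
      hp.resolve_right fun h => hchain.elim (· h.1) (· hquarter.1)
    exact hexpanded.isAdmissible_step hquarter

end Dynamics

section Orbit

/-- The effect on Pauli coordinates of conjugation by the successive factors `Z(θ) H` of a word. -/
noncomputable def evolve (p : BlochVector ℂ) (l : List ℝ) : BlochVector ℂ :=
  l.foldl (fun q θ => q.step (Complex.cos θ) (Complex.sin θ)) p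

variable {Γ : Type*} [LinearOrderedCommGroupWithZero Γ] {v : Valuation ℂ Γ}

theorem IsAdmissible.isOffAxis_evolve {θ : ℝ} {l : List ℝ} {p : BlochVector ℂ}
    (hp : p.IsAdmissible v (Complex.cos θ))
    (hl : ∀ φ ∈ l, IsNontrivialTurn v (Complex.cos φ) (Complex.sin φ))
    (hchain : (θ :: l).IsChain fun φ ψ : ℝ => Complex.cos φ ≠ 0 ∨ Complex.cos ψ ≠ 0) :
    (p.evolve l).IsOffAxis v := by
  induction l generalizing θ p with
  | nil => exact hp.isOffAxis
  | cons φ l ih =>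
    rw [List.isChain_cons_cons] at hchain
    rw [List.forall_mem_cons] at hl
    exact ih (hp.step hl.1 hchain.1) hl.2 hchain.2

theorem isOffAxis_evolve_pauliX {l : List ℝ} (hne : l ≠ [])
    (hl : ∀ φ ∈ l, IsNontrivialTurn v (Complex.cos φ) (Complex.sin φ))
    (hchain : l.IsChain fun φ ψ : ℝ => Complex.cos φ ≠ 0 ∨ Complex.cos ψ ≠ 0) :
    (evolve ⟨1, 0, 0⟩ l).IsOffAxis v := by
  obtain ⟨θ, l, rfl⟩ := List.exists_cons_of_ne_nil hne
  rw [List.forall_mem_cons] at hl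
  exact (isAdmissible_step_pauliX hl.1).isOffAxis_evolve hl.2 hchain

end Orbit

/-- The traceless matrix with the given Pauli coordinates. -/
def toMatrix (p : BlochVector ℂ) : Matrix (Fin 2) (Fin 2) ℂ :=
  !![p.z, p.x - Complex.I * p.y; p.x + Complex.I * p.y, -p.z]

theorem toMatrix_injective : Function.Injective toMatrix := by
  intro p q h
  have h00 : p.z = q.z := congr_fun₂ h 0 0
  have h01 : p.x - Complex.I * p.y = q.x - Complex.I * q.y := congr_fun₂ h 0 1
  have h10 : p.x + Complex.I * p.y = q.x + Complex.I * q.y := congr_fun₂ h 1 0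
  ext
  · linear_combination (h01 + h10) / 2
  · exact mul_left_cancel₀ Complex.I_ne_zero (by linear_combination (h10 - h01) / 2)
  · exact h00

end BlochVector

open BlochVector

/-- The Hadamard matrix without its factor `1 / √2`, so that its square is `2` and it still
conjugates `Zm` and `Xm` into each other. -/
def hadamardGate : Matrix (Fin 2) (Fin 2) ℂ := !![1, 1; 1, -1]

/-- The factor `A_{k + 1}` of an alternating word: indices start from `0`, so `Z` comes first. -/
noncomputable def alternatingGate (k : ℕ) (θ : ℝ) : Matrix (Fin 2) (Fin 2) ℂ :=
  if k % 2 = 0 then Zm θ else Xm θ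

/-- The product of the matrices `Z(θ) H` over a list of angles. -/
noncomputable def hadamardWord (l : List ℝ) : Matrix (Fin 2) (Fin 2) ℂ :=
  (l.map fun θ => Zm θ * hadamardGate).prod

theorem semiconjBy_hadamardGate_Zm (θ : ℝ) : SemiconjBy hadamardGate (Zm θ) (Xm θ) := by
  simp only [SemiconjBy, hadamardGate, Zm, Xm, Matrix.mul_fin_two, Matrix.smul_of,
    Matrix.smul_cons, Matrix.smul_empty, smul_eq_mul]
  ring_nf

theorem semiconjBy_hadamardGate_Xm (θ : ℝ) : SemiconjBy hadamardGate (Xm θ) (Zm θ) := by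
  simp only [SemiconjBy, hadamardGate, Zm, Xm, Matrix.mul_fin_two, Matrix.smul_of,
    Matrix.smul_cons, Matrix.smul_empty, smul_eq_mul]
  ring_nf

theorem semiconjBy_hadamardGate (k : ℕ) (θ : ℝ) :
    SemiconjBy hadamardGate (alternatingGate k θ) (alternatingGate (k + 1) θ) := by
  rcases Nat.mod_two_eq_zero_or_one k with hk | hk
  · simpa [alternatingGate, hk, Nat.succ_mod_two_eq_zero_iff] using semiconjBy_hadamardGate_Zm θ
  · simpa [alternatingGate, hk, Nat.succ_mod_two_eq_zero_iff] using semiconjBy_hadamardGate_Xm θ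

theorem semiconjBy_hadamardGate_pow (j k : ℕ) (θ : ℝ) :
    SemiconjBy (hadamardGate ^ k) (alternatingGate j θ) (alternatingGate (j + k) θ) := by
  induction k with
  | zero => simp
  | succ k ih =>
    rw [pow_succ']
    exact (semiconjBy_hadamardGate (j + k) θ).mul_left ih

theorem prod_alternatingGate_mul_hadamardGate_pow {n : ℕ} (α : Fin n → ℝ) :
    (List.ofFn fun j : Fin n => alternatingGate j (α j)).prod * hadamardGate ^ n =
      hadamardWord (List.ofFn α) := by
  induction n with
  | zero => simp [hadamardWord]
  | succ n ih =>
    have hlast := semiconjBy_hadamardGate_pow 0 n (α (Fin.last n))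
    rw [zero_add, SemiconjBy] at hlast
    rw [hadamardWord, List.ofFn_succ', List.ofFn_succ' α, List.map_concat, List.concat_eq_append,
      List.concat_eq_append, List.prod_append, List.prod_append, List.prod_singleton,
      List.prod_singleton, ← hadamardWord, ← ih]
    simp only [Fin.val_castSucc, Fin.val_last, pow_succ, mul_assoc]
    rw [← mul_assoc _ (hadamardGate ^ n), ← hlast]
    simp only [alternatingGate, Nat.zero_mod, if_true, mul_assoc]

theorem isUnit_hadamardWord (l : List ℝ) : IsUnit (hadamardWord l) := by
  refine List.prod_isUnit fun A hA => ?_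
  obtain ⟨θ, -, rfl⟩ := List.mem_map.mp hA
  have hdet : (Zm θ * hadamardGate).det ≠ 0 := by
    rw [Matrix.det_mul]
    exact mul_ne_zero (by simp [Zm]) (by norm_num [hadamardGate])
  exact (Matrix.isUnit_iff_isUnit_det _).mpr hdet.isUnit

theorem semiconjBy_toMatrix_step (p : BlochVector ℂ) (θ : ℝ) :
    SemiconjBy (Zm θ * hadamardGate) (p.step (Complex.cos θ) (Complex.sin θ)).toMatrix
      p.toMatrix := by
  set c := Complex.cos θ with hc
  set s := Complex.sin θ with hs
  have hcs : s ^ 2 + c ^ 2 = 1 := Complex.sin_sq_add_cos_sq θ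
  have hI := Complex.I_sq
  simp only [SemiconjBy, toMatrix, step, Zm, hadamardGate, Complex.exp_mul_I, ← hc, ← hs,
    Matrix.mul_fin_two, EmbeddingLike.apply_eq_iff_eq, Matrix.vecCons_inj, and_true]
  refine ⟨⟨?_, ?_⟩, ?_, ?_⟩
  · linear_combination p.y * s * hI
  · linear_combination -(p.y * s) * hI
  · linear_combination (p.y * s * c - p.x * s ^ 2) * hI + (p.x + Complex.I * p.y) * hcs
  · linear_combination (p.y * s * c - p.x * s ^ 2) * hI + (p.x + Complex.I * p.y) * hcs

theorem semiconjBy_hadamardWord (p : BlochVector ℂ) (l : List ℝ) :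
    SemiconjBy (hadamardWord l) (p.evolve l).toMatrix p.toMatrix := by
  induction l generalizing p with
  | nil => exact SemiconjBy.one_left _
  | cons θ l ih => exact (semiconjBy_toMatrix_step p θ).mul_left (ih _)

theorem toMatrix_pauliX : toMatrix ⟨1, 0, 0⟩ = Xm Real.pi := by
  ext i j
  fin_cases i <;> fin_cases j <;> norm_num [toMatrix, Xm]

theorem toMatrix_pauliZ : toMatrix ⟨0, 0, 1⟩ = Zm Real.pi := by
  ext i j
  fin_cases i <;> fin_cases j <;> simp [toMatrix, Zm]

theorem evolve_pauliX_of_commute {n : ℕ} {α : Fin n → ℝ}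
    (hcomm : Commute (Xm Real.pi) (List.ofFn fun j : Fin n => alternatingGate j (α j)).prod) :
    evolve ⟨1, 0, 0⟩ (List.ofFn α) = ⟨1, 0, 0⟩ ∨ evolve ⟨1, 0, 0⟩ (List.ofFn α) = ⟨0, 0, 1⟩ := by
  have hodd : alternatingGate (n + 1 + n) Real.pi = Xm Real.pi := if_neg (by lia)
  have hpow : SemiconjBy (hadamardGate ^ n) (alternatingGate (n + 1) Real.pi) (Xm Real.pi) :=
    hodd ▸ semiconjBy_hadamardGate_pow (n + 1) n Real.pi
  have hword : SemiconjBy (hadamardWord (List.ofFn α)) (alternatingGate (n + 1) Real.pi)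
      (Xm Real.pi) :=
    prod_alternatingGate_mul_hadamardGate_pow α ▸ SemiconjBy.mul_left hcomm.symm hpow
  have horbit := semiconjBy_hadamardWord ⟨1, 0, 0⟩ (List.ofFn α)
  rw [toMatrix_pauliX] at horbit
  have heq : (evolve ⟨1, 0, 0⟩ (List.ofFn α)).toMatrix = alternatingGate (n + 1) Real.pi :=
    (isUnit_hadamardWord _).mul_left_cancel (horbit.eq.trans hword.eq.symm)
  rw [alternatingGate, ← toMatrix_pauliX, ← toMatrix_pauliZ] at heq
  split_ifs at heq
  · exact .inr (toMatrix_injective heq)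
  · exact .inl (toMatrix_injective heq)

theorem radin_sadun_general (n : ℕ) (hn : 1 ≤ n) (α : Fin n → ℝ)
    (hrat : ∀ j, ∃ q : ℚ, α j / Real.pi = q)
    (hcomm : Commute (Xm Real.pi) (List.ofFn fun j : Fin n =>
      if (j : ℕ) % 2 = 0 then Zm (α j) else Xm (α j)).prod) :
    (∃ j : Fin n, Cong (α j) 0 ∨ Cong (α j) Real.pi) ∨
    (∃ j : Fin n, ∃ hj : (j : ℕ) + 1 < n,
      (Cong (α j) (Real.pi / 2) ∨ Cong (α j) (-(Real.pi / 2))) ∧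
      (Cong (α ⟨(j : ℕ) + 1, hj⟩) (Real.pi / 2) ∨
        Cong (α ⟨(j : ℕ) + 1, hj⟩) (-(Real.pi / 2)))) := by
  by_contra! hcon
  simp only [← not_or, ← sin_eq_zero_iff_cong, ← cos_eq_zero_iff_cong] at hcon
  obtain ⟨hsin, hcos⟩ := hcon
  obtain ⟨B, h2⟩ := exists_valuation_two_lt_one (K := ℂ)
  have hoff : (evolve ⟨1, 0, 0⟩ (List.ofFn α)).IsOffAxis B.valuation := by
    refine isOffAxis_evolve_pauliX ?_ ?_ ?_
    · simpa [List.ofFn_eq_nil_iff] using Nat.ne_of_gt hn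
    · exact List.forall_mem_ofFn_iff.mpr fun j => isNontrivialTurn_cos_sin h2 (hrat j) (hsin j)
    · exact List.isChain_ofFn.mpr fun j hj => by
        exact_mod_cast not_or_of_imp (hcos ⟨j, by lia⟩ hj)
  rcases evolve_pauliX_of_commute hcomm with h | h <;> simp [h, IsOffAxis] at hoff

theorem radin_sadun (n : ℕ) (hn : 1 ≤ n) (α : Fin n → ℝ)
    (hrat : ∀ j, ∃ q : ℚ, α j / Real.pi = q)
    (M : Matrix (Fin 2) (Fin 2) ℂ)
    (hM : M = (List.ofFn fun j : Fin n =>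
      if (j : ℕ) % 2 = 0 then Zm (α j) else Xm (α j)).prod)
    (h : ∃ lam : ℂ, lam ≠ 0 ∧ M = lam • (1 : Matrix (Fin 2) (Fin 2) ℂ)) :
    (∃ j : Fin n, Cong (α j) 0 ∨ Cong (α j) Real.pi) ∨
    (∃ j : Fin n, ∃ hj : (j : ℕ) + 1 < n,
      (Cong (α j) (Real.pi / 2) ∨ Cong (α j) (-(Real.pi / 2))) ∧
      (Cong (α ⟨(j : ℕ) + 1, hj⟩) (Real.pi / 2) ∨
        Cong (α ⟨(j : ℕ) + 1, hj⟩) (-(Real.pi / 2)))) := by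
  obtain ⟨lam, -, hlam⟩ := h
  exact radin_sadun_general n hn α hrat (hM ▸ hlam ▸ (Commute.one_right _).smul_right lam)
end

section
/- Let m ≥ 1 and let y be a point of the m-dimensional torus T^m = (ℝ/2πℤ)^m. Then the topological closure of the set {k·y : k ∈ ℕ} in T^m is a finite union of sets of the form ℓ_i + F(T^m), i ∈ I with I finite, where F : T^m → T^m is the endomorphism of T^m induced by a single m×m integer matrix and each ℓ_i ∈ T^m has all coordinates in 2πℚ (mod 2πℤ). -/
/-!
A closed subgroup `H` of a torus is cut out by the integer relations that its points satisfy: if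
`x` satisfies all of them, then every character has the same integral over `H` as over the coset
`x + H`; trigonometric polynomials being dense, so does every continuous function, and a Urysohn
function then rules out that `H` and `x + H` are disjoint. The Smith normal form of the lattice of
relations provides an automorphism of the torus that turns these relations into equations
`a i • w i = 0`, one for each coordinate. Such an equation leaves the coordinate free if `a i = 0`
and restricts it to finitely many torsion points otherwise. The closure of a submonoid of a compact
group is a closed subgroup, so this applies to the multiples of a point.
-/

open MeasureTheory Module Matrix
open scoped Pointwise

section CompactGroups

lemma continuous_integral_continuousMap {K E : Type*} [TopologicalSpace K] [CompactSpace K]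
    [MeasurableSpace K] [BorelSpace K] [NormedAddCommGroup E] [NormedSpace ℝ E]
    [SecondCountableTopologyEither K E] (μ : Measure K) [IsFiniteMeasure μ] :
    Continuous fun f : C(K, E) ↦ ∫ x, f x ∂μ :=
  (continuous_integral.comp (ContinuousMap.toLp 1 μ ℝ).continuous).congr fun f ↦
    integral_congr_ae (ContinuousMap.coeFn_toLp μ f)

lemma integral_addChar_eq_zero_of_ne_one {G : Type*} [AddGroup G] [MeasurableSpace G]
    [MeasurableAdd G] (μ : Measure G) [μ.IsAddLeftInvariant] {ψ : AddChar G ℂ} (hψ : ψ ≠ 1) :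
    ∫ x, ψ x ∂μ = 0 := by
  obtain ⟨g, hg⟩ := AddChar.ne_one_iff.1 hψ
  have translate : ψ g * ∫ x, ψ x ∂μ = ∫ x, ψ x ∂μ := by
    rw [← integral_const_mul, ← integral_add_left_eq_self (fun x ↦ ψ x) g]
    simp only [AddChar.map_add_eq_mul]
  exact (mul_left_eq_self₀.1 translate).resolve_left hg

variable {G κ : Type*} [AddGroup G] [TopologicalSpace G] [IsTopologicalAddGroup G]

lemma integral_coset_eq_integral_subgroup {H : AddSubgroup G} [CompactSpace H] [MeasurableSpace H]
    [BorelSpace H] (μ : Measure H) [μ.IsAddLeftInvariant] [IsFiniteMeasure μ]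
    {ψ : κ → AddChar G ℂ} (hψ : ∀ k, Continuous (ψ k))
    (dense : Dense (Submodule.span ℂ (Set.range fun k ↦ (⟨ψ k, hψ k⟩ : C(G, ℂ))) : Set C(G, ℂ)))
    {x : G} (hx : ∀ k, (∀ h ∈ H, ψ k h = 1) → ψ k x = 1) (f : C(G, ℂ)) :
    ∫ h : H, f (x + h) ∂μ = ∫ h : H, f h ∂μ := by
  have continuous_coset (y : G) : Continuous fun f : C(G, ℂ) ↦ ∫ h : H, f (y + h) ∂μ :=
    (continuous_integral_continuousMap μ).comp
      (ContinuousMap.continuous_precomp (⟨fun h : H ↦ y + h, by fun_prop⟩ : C(H, G)))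
  have integrable_coset (y : G) (f : C(G, ℂ)) : Integrable (fun h : H ↦ f (y + h)) μ :=
    (by fun_prop : Continuous fun h : H ↦ f (y + h)).integrable_of_hasCompactSupport
      (.of_compactSpace _)
  suffices Set.EqOn (fun f : C(G, ℂ) ↦ ∫ h : H, f (x + h) ∂μ) (fun f ↦ ∫ h : H, f (0 + h) ∂μ)
      (Submodule.span ℂ (Set.range fun k ↦ (⟨ψ k, hψ k⟩ : C(G, ℂ)))) by
    simpa using congrFun ((continuous_coset x).ext_on dense (continuous_coset 0) this) f
  intro f hf
  induction hf using Submodule.span_induction with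
  | mem _ hf =>
    obtain ⟨k, rfl⟩ := hf
    simp only [ContinuousMap.coe_mk, AddChar.map_add_eq_mul, integral_const_mul]
    by_cases trivial_on_H : ∀ h ∈ H, ψ k h = 1
    · rw [hx k trivial_on_H, AddChar.map_zero_eq_one]
    · have : (ψ k).compAddMonoidHom H.subtype ≠ 1 := by
        simpa [AddChar.ne_one_iff] using trivial_on_H
      rw [show ∫ h : H, ψ k h ∂μ = 0 from integral_addChar_eq_zero_of_ne_one μ this]
      simp
  | zero => simp
  | add f g _ _ hf hg =>
    simp only [ContinuousMap.add_apply] at hf hg ⊢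
    rw [integral_add (integrable_coset x f) (integrable_coset x g), hf, hg,
      ← integral_add (integrable_coset 0 f) (integrable_coset 0 g)]
  | smul c f _ hf =>
    simp only [ContinuousMap.smul_apply, integral_smul] at hf ⊢
    rw [hf]

theorem mem_of_addChar_eq_one_of_isClosed [CompactSpace G] [T2Space G] {ψ : κ → AddChar G ℂ}
    (hψ : ∀ k, Continuous (ψ k))
    (dense : Dense (Submodule.span ℂ (Set.range fun k ↦ (⟨ψ k, hψ k⟩ : C(G, ℂ))) : Set C(G, ℂ)))
    {H : AddSubgroup G} (hH : IsClosed (H : Set G)) {x : G}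
    (hx : ∀ k, (∀ h ∈ H, ψ k h = 1) → ψ k x = 1) : x ∈ H := by
  by_contra hxH
  have : CompactSpace H := isCompact_iff_compactSpace.1 hH.isCompact
  let _ : MeasurableSpace H := borel H
  have : BorelSpace H := ⟨rfl⟩
  let μ : Measure H := Measure.addHaar
  have disjoint_coset : Disjoint (H : Set G) (x +ᵥ (H : Set G)) := by
    rw [Set.disjoint_right]
    rintro _ ⟨h, hh, rfl⟩ hxh
    exact hxH ((H.add_mem_cancel_right hh).1 hxh)
  obtain ⟨u, hu_zero, hu_one, -⟩ :=
    exists_continuous_zero_one_of_isClosed hH (hH.vadd x) disjoint_coset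
  have integral_eq := integral_coset_eq_integral_subgroup μ hψ dense hx
    ⟨fun g ↦ (u g : ℂ), by fun_prop⟩
  have hu_coset (h : H) : u (x + h) = 1 := hu_one (Set.vadd_mem_vadd_set h.2)
  have hu_subgroup (h : H) : u h = 0 := hu_zero h.2
  have : μ.real Set.univ = 0 := by
    simpa [hu_coset, hu_subgroup] using integral_eq
  exact measureReal_univ_ne_zero this

end CompactGroups

section SmithNormalForm

lemma exists_basis_eq_span_smul {ι R M : Type*} [Finite ι] [CommRing R] [IsDomain R]
    [IsPrincipalIdealRing R] [AddCommGroup M] [Module R M] (b : Basis ι R M) (N : Submodule R M) :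
    ∃ (b' : Basis ι R M) (a : ι → R), N = Submodule.span R (Set.range fun i ↦ a i • b' i) := by
  obtain ⟨n, b', bN, f, a, snf⟩ := N.smithNormalForm b
  have extend_f (j : Fin n) :
      Function.extend f a 0 (f j) • b' (f j) = (bN j : M) := by
    rw [f.injective.extend_apply, snf]
  refine ⟨b', Function.extend f a 0, le_antisymm ?_ (Submodule.span_le.2 ?_)⟩
  · rw [← Submodule.range_subtype N, LinearMap.range_eq_map, ← bN.span_eq, Submodule.map_span]
    refine Submodule.span_mono ?_
    rintro _ ⟨_, ⟨j, rfl⟩, rfl⟩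
    exact ⟨f j, extend_f j⟩
  · rintro _ ⟨i, rfl⟩
    by_cases hi : ∃ j, f j = i
    · obtain ⟨j, rfl⟩ := hi
      simp only [extend_f, SetLike.mem_coe, SetLike.coe_mem]
    · simp [Function.extend_apply' _ _ _ hi]

lemma exists_GL_eq_span_smul_row {ι R : Type*} [Fintype ι] [DecidableEq ι] [CommRing R]
    [IsDomain R] [IsPrincipalIdealRing R] (N : Submodule R (ι → R)) :
    ∃ (P : GL ι R) (a : ι → R), N = Submodule.span R (Set.range fun i ↦ a i • P.val.row i) := by
  obtain ⟨b, a, hN⟩ := exists_basis_eq_span_smul (Pi.basisFun R ι) N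
  have := (Pi.basisFun R ι).invertibleToMatrix b
  exact ⟨unitOfInvertible ((Pi.basisFun R ι).toMatrix b)ᵀ, a, hN⟩

end SmithNormalForm

section IntegerMatrices

variable {l m n G : Type*} [Fintype n] [AddCommGroup G]

/-- The homomorphism `F : Gⁿ → Gᵐ` induced by an integer matrix, `F(z)_j = ∑ k, A j k • z k`. It
is `Matrix.mulVec` for a vector with entries in an abelian group instead of the ring `ℤ`. -/
def intMulVec (A : Matrix m n ℤ) : (n → G) →+ (m → G) where
  toFun z j := ∑ k, A j k • z k
  map_zero' := by ext; simp
  map_add' z w := by ext; simp [Finset.sum_add_distrib]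

lemma intMulVec_apply (A : Matrix m n ℤ) (z : n → G) (j : m) :
    intMulVec A z j = ∑ k, A j k • z k := rfl

lemma intMulVec_mul [Fintype m] (A : Matrix l m ℤ) (B : Matrix m n ℤ) (z : n → G) :
    intMulVec (A * B) z = intMulVec A (intMulVec B z) := by
  ext j
  simp only [intMulVec_apply, Matrix.mul_apply, Finset.sum_smul, Finset.smul_sum, mul_smul]
  exact Finset.sum_comm

lemma intMulVec_diagonal [DecidableEq n] (d : n → ℤ) (z : n → G) :
    intMulVec (diagonal d) z = fun i ↦ d i • z i := by
  ext i
  simp [intMulVec_apply, diagonal_apply, ite_smul]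

lemma intMulVec_one [DecidableEq n] (z : n → G) : intMulVec (1 : Matrix n n ℤ) z = z := by
  simp [← diagonal_one, intMulVec_diagonal]

end IntegerMatrices

section QuasiTorus

variable {ι G : Type*} [Fintype ι] [AddCommGroup G]

/-- A quasi-torus in `G ^ ι`: a finite union of translates of the image of one integer matrix by
torsion points. When `G` is the circle `ℝ/pℤ`, torsion means that all coordinates lie in `pℚ`. -/
def IsQuasiTorus (X : Set (ι → G)) : Prop :=
  ∃ (A : Matrix ι ι ℤ) (s : Set (ι → G)), s.Finite ∧ (∀ ℓ ∈ s, IsOfFinAddOrder ℓ) ∧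
    X = s + Set.range (intMulVec A)

lemma IsQuasiTorus.image_intMulVec {X : Set (ι → G)} (hX : IsQuasiTorus X) (P : Matrix ι ι ℤ) :
    IsQuasiTorus (intMulVec P '' X) := by
  obtain ⟨A, s, s_finite, s_torsion, rfl⟩ := hX
  refine ⟨P * A, intMulVec P '' s, s_finite.image _, ?_, ?_⟩
  · rintro _ ⟨ℓ, hℓ, rfl⟩
    exact (intMulVec P).isOfFinAddOrder (s_torsion ℓ hℓ)
  · rw [Set.image_add, ← Set.range_comp]
    congr 2
    ext1 z
    exact (intMulVec_mul P A z).symm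

lemma IsQuasiTorus.exists_eq_iUnion {X : Set (ι → G)} (hX : IsQuasiTorus X) :
    ∃ (A : Matrix ι ι ℤ) (t : ℕ) (ℓ : Fin t → ι → G), (∀ i, IsOfFinAddOrder (ℓ i)) ∧
      X = ⋃ i, {w | ∃ z : ι → G, w = fun j ↦ ℓ i j + ∑ r, A j r • z r} := by
  obtain ⟨A, s, s_finite, s_torsion, rfl⟩ := hX
  obtain ⟨t, ℓ, -, rfl⟩ := s_finite.fin_param
  refine ⟨A, t, ℓ, fun i ↦ s_torsion _ ⟨i, rfl⟩, ?_⟩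
  ext w
  simp only [Set.mem_add, Set.exists_range_iff, Set.mem_iUnion]
  exact exists_congr fun i ↦ exists_congr fun z ↦ eq_comm

lemma exists_setOf_zsmul_eq_zero_eq_add_range (hG : ∀ a : ℤ, a ≠ 0 → {u : G | a • u = 0}.Finite)
    (a : ℤ) : ∃ (s : Set G) (c : ℤ), s.Finite ∧ (∀ u ∈ s, IsOfFinAddOrder u) ∧
      {u : G | a • u = 0} = s + Set.range fun u : G ↦ c • u := by
  obtain rfl | ha := eq_or_ne a 0
  · exact ⟨{0}, 1, by simp⟩
  · exact ⟨{u | a • u = 0}, 0, hG a ha,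
      fun u hu ↦ isOfFinAddOrder_iff_zsmul_eq_zero.2 ⟨a, ha, hu⟩, by simp [Set.range_const]⟩

lemma isQuasiTorus_setOf_zsmul_eq_zero (hG : ∀ a : ℤ, a ≠ 0 → {u : G | a • u = 0}.Finite)
    (a : ι → ℤ) : IsQuasiTorus {w : ι → G | ∀ i, a i • w i = 0} := by
  classical
  choose s c s_finite s_torsion h_eq using
    fun i ↦ exists_setOf_zsmul_eq_zero_eq_add_range hG (a i)
  refine ⟨diagonal c, Set.univ.pi s, Set.Finite.pi s_finite,
    fun ℓ hℓ ↦ .pi fun i ↦ s_torsion i _ (hℓ i trivial), ?_⟩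
  ext w
  have coordinate (i : ι) : a i • w i = 0 ↔ ∃ u ∈ s i, ∃ v, u + c i • v = w i := by
    simpa [Set.mem_add] using Set.ext_iff.1 (h_eq i) (w i)
  simp only [Set.mem_ofPred_eq, coordinate, Set.mem_add, Set.mem_univ_pi, Set.exists_range_iff,
    intMulVec_diagonal, funext_iff, Pi.add_apply]
  constructor
  · intro h
    choose u hu v huv using h
    exact ⟨u, hu, v, huv⟩
  · rintro ⟨u, hu, v, huv⟩ i
    exact ⟨u i, hu i, v i, huv i⟩

/-- The integer vectors `n` such that the character `z ↦ ∑ i, n i • z i` of `G ^ ι` vanishes on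
`H`, that is, the annihilator of `H` when `G` is a circle. -/
def relationLattice (H : AddSubgroup (ι → G)) : Submodule ℤ (ι → ℤ) :=
  ⨅ z ∈ H, LinearMap.ker (Fintype.linearCombination ℤ z)

lemma mem_relationLattice {H : AddSubgroup (ι → G)} {n : ι → ℤ} :
    n ∈ relationLattice H ↔ ∀ z ∈ H, ∑ i, n i • z i = 0 := by
  simp [relationLattice, Fintype.linearCombination_apply]

lemma ker_linearCombination_comp {G' F : Type*} [AddCommGroup G'] [FunLike F G G']
    [AddMonoidHomClass F G G'] (f : F) (hf : Function.Injective f) (z : ι → G) :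
    LinearMap.ker (Fintype.linearCombination ℤ (f ∘ z)) =
      LinearMap.ker (Fintype.linearCombination ℤ z) := by
  ext n
  simp only [LinearMap.mem_ker, Fintype.linearCombination_apply, Function.comp_apply,
    ← map_zsmul, ← map_sum, map_eq_zero_iff f hf]

lemma relationLattice_comap {G' : Type*} [AddCommGroup G'] (e : G ≃+ G')
    (H : AddSubgroup (ι → G')) :
    relationLattice (H.comap (e.toAddMonoidHom.compLeft ι)) = relationLattice H := by
  refine e.surjective.comp_left.iInf_congr (e ∘ ·) fun z ↦ ?_
  rw [ker_linearCombination_comp e e.injective z]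
  rfl

lemma isQuasiTorus_setOf_le_ker_linearCombination
    (hG : ∀ a : ℤ, a ≠ 0 → {u : G | a • u = 0}.Finite) (N : Submodule ℤ (ι → ℤ)) :
    IsQuasiTorus {z : ι → G | N ≤ LinearMap.ker (Fintype.linearCombination ℤ z)} := by
  classical
  obtain ⟨P, a, rfl⟩ := exists_GL_eq_span_smul_row N
  convert (isQuasiTorus_setOf_zsmul_eq_zero hG a).image_intMulVec (P⁻¹ : GL ι ℤ).val
  have le_ker_iff (z : ι → G) : Submodule.span ℤ (Set.range fun i ↦ a i • P.val.row i) ≤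
      LinearMap.ker (Fintype.linearCombination ℤ z) ↔ ∀ i, a i • intMulVec P.val z i = 0 := by
    simp only [Submodule.span_le, Set.range_subset_iff, SetLike.mem_coe, LinearMap.mem_ker,
      map_smul]
    rfl
  ext z
  simp only [Set.mem_ofPred_eq, le_ker_iff, Set.mem_image]
  constructor
  · intro hz
    exact ⟨intMulVec P.val z, hz, by rw [← intMulVec_mul, Units.inv_mul, intMulVec_one]⟩
  · rintro ⟨w, hw, rfl⟩
    simpa only [← intMulVec_mul, Units.mul_inv, intMulVec_one] using hw

end QuasiTorus

section ClosedSubgroups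

open UnitAddTorus

lemma addChar_sum {κ A M : Type*} [AddCommMonoid A] [CommMonoid M] (ψ : AddChar A M)
    (s : Finset κ) (f : κ → A) : ψ (∑ i ∈ s, f i) = ∏ i ∈ s, ψ (f i) :=
  map_prod ψ.toMonoidHom (fun i ↦ Multiplicative.ofAdd (f i)) s

variable {ι : Type*} [Fintype ι]

lemma mFourier_apply_eq_toCircle (n : ι → ℤ) (x : UnitAddTorus ι) :
    mFourier n x = (AddCircle.toCircle (∑ i, n i • x i) : ℂ) := by
  simp only [mFourier, ContinuousMap.coe_mk, fourier_apply]
  exact (addChar_sum (Circle.coeHom.compAddChar AddCircle.toCircle_addChar) _ _).symm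

/-- `UnitAddTorus.mFourier n` as an additive character of the torus: the Fourier monomials are the
characters to which the integration argument on compact groups is applied. -/
noncomputable def mFourierAddChar (n : ι → ℤ) : AddChar (UnitAddTorus ι) ℂ where
  toFun := mFourier n
  map_zero_eq_one' := by simp [mFourier_apply_eq_toCircle]
  map_add_eq_mul' x y := by
    simp [mFourier_apply_eq_toCircle, Finset.sum_add_distrib, AddCircle.toCircle_add]

lemma mFourierAddChar_eq_one_iff {n : ι → ℤ} {x : UnitAddTorus ι} :
    mFourierAddChar n x = 1 ↔ ∑ i, n i • x i = 0 := by
  change mFourier n x = 1 ↔ _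
  rw [mFourier_apply_eq_toCircle, Circle.coe_eq_one, ← AddCircle.toCircle_zero (T := 1),
    (AddCircle.injective_toCircle one_ne_zero).eq_iff]

lemma mem_of_relationLattice_le_ker_unitAddTorus {H : AddSubgroup (UnitAddTorus ι)}
    (hH : IsClosed (H : Set (UnitAddTorus ι))) {x : UnitAddTorus ι}
    (hx : relationLattice H ≤ LinearMap.ker (Fintype.linearCombination ℤ x)) : x ∈ H := by
  refine mem_of_addChar_eq_one_of_isClosed (ψ := mFourierAddChar)
    (fun n ↦ (mFourier n).continuous)
    (Submodule.dense_iff_topologicalClosure_eq_top.2 span_mFourier_closure_eq_top) hH ?_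
  simp only [mFourierAddChar_eq_one_iff]
  exact fun n hn ↦ hx (mem_relationLattice.2 hn)

variable {p : ℝ} [Fact (0 < p)]

theorem mem_iff_relationLattice_le_ker {H : AddSubgroup (ι → AddCircle p)}
    (hH : IsClosed (H : Set (ι → AddCircle p))) {z : ι → AddCircle p} :
    z ∈ H ↔ relationLattice H ≤ LinearMap.ker (Fintype.linearCombination ℤ z) := by
  refine ⟨fun hz ↦ iInf₂_le z hz, fun hz ↦ ?_⟩
  have hp : p ≠ 0 := (Fact.out : 0 < p).ne'
  let e : UnitAddCircle ≃+ AddCircle p := AddCircle.equivAddCircle 1 p one_ne_zero hp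
  have he : Continuous e := (AddCircle.homeomorphAddCircle 1 p one_ne_zero hp).continuous
  obtain ⟨x, rfl : e ∘ x = z⟩ := e.surjective.comp_left z
  rw [ker_linearCombination_comp e e.injective, ← relationLattice_comap e] at hz
  exact mem_of_relationLattice_le_ker_unitAddTorus
    (hH.preimage (continuous_pi fun i ↦ he.comp (continuous_apply i))) hz

lemma exists_rat_of_isOfFinAddOrder {u : AddCircle p} (hu : IsOfFinAddOrder u) :
    ∃ q : ℚ, u = ((p * q : ℝ) : AddCircle p) := by
  obtain ⟨x, rfl⟩ := QuotientAddGroup.mk_surjective u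
  obtain ⟨q, hq⟩ := AddCircle.isOfFinAddOrder_iff_exists_rat_eq_div.1 hu
  exact ⟨q, by rw [hq, mul_div_cancel₀ x (Fact.out : 0 < p).ne']⟩

theorem isQuasiTorus_of_isClosed {H : AddSubgroup (ι → AddCircle p)}
    (hH : IsClosed (H : Set (ι → AddCircle p))) : IsQuasiTorus (H : Set (ι → AddCircle p)) := by
  have torsion_finite (a : ℤ) (ha : a ≠ 0) : {u : AddCircle p | a • u = 0}.Finite :=
    AddCircle.finite_torsion_of_isSMulRegular_int p a
      (.of_right_eq_zero_of_smul fun _ ↦ by simp [ha])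
  convert isQuasiTorus_setOf_le_ker_linearCombination torsion_finite (relationLattice H)
  ext z
  exact mem_iff_relationLattice_le_ker hH

end ClosedSubgroups

theorem closure_of_monoid_is_quasi_torus_general {ι : Type*} [Fintype ι] {p : ℝ} [Fact (0 < p)]
    (M : AddSubmonoid (ι → AddCircle p)) :
    ∃ (A : Matrix ι ι ℤ) (t : ℕ) (ℓ : Fin t → ι → AddCircle p),
      (∀ i j, ∃ q : ℚ, ℓ i j = ((p * q : ℝ) : AddCircle p)) ∧
      closure (M : Set (ι → AddCircle p)) =
        ⋃ i, {w | ∃ z : ι → AddCircle p, w = fun j ↦ ℓ i j + ∑ r, A j r • z r} := by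
  let H := (AddSubgroup.closure (M : Set (ι → AddCircle p))).topologicalClosure
  have closure_eq : closure (M : Set (ι → AddCircle p)) = H := by
    conv_lhs => rw [← AddSubmonoid.closure_eq M]
    exact closure_addSubmonoidClosure_eq_closure_addSubgroupClosure _
  obtain ⟨A, t, ℓ, ℓ_torsion, hH⟩ :=
    (isQuasiTorus_of_isClosed (H := H) isClosed_closure).exists_eq_iUnion
  exact ⟨A, t, ℓ, fun i j ↦ exists_rat_of_isOfFinAddOrder ((ℓ_torsion i).apply j),
    closure_eq.trans hH⟩

theorem closure_of_monoid_is_quasi_torus (m : ℕ) (hm : 1 ≤ m)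
    (y : Fin m → AddCircle (2 * Real.pi)) :
    ∃ (A : Matrix (Fin m) (Fin m) ℤ) (t : ℕ)
      (ℓ : Fin t → (Fin m → AddCircle (2 * Real.pi))),
      (∀ (i : Fin t) (j : Fin m), ∃ q : ℚ,
        ℓ i j = ((2 * Real.pi * (q : ℝ) : ℝ) : AddCircle (2 * Real.pi))) ∧
      closure {z : Fin m → AddCircle (2 * Real.pi) | ∃ k : ℕ, z = k • y} =
        ⋃ i : Fin t,
          {w : Fin m → AddCircle (2 * Real.pi) |
            ∃ z : Fin m → AddCircle (2 * Real.pi),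
              w = fun j => ℓ i j + ∑ r : Fin m, A j r • z r} := by
  have : Fact (0 < 2 * Real.pi) := ⟨Real.two_pi_pos⟩
  simpa [AddSubmonoid.coe_multiples, Set.range, eq_comm] using
    closure_of_monoid_is_quasi_torus_general (AddSubmonoid.multiples y)
end

section
/- Let m ≥ 1 and let P₁, …, P_s be polynomials in m variables with complex coefficients. Let (x^{(i)})_{i ∈ ℕ} be a sequence of vectors in ℝ^m, each of whose coordinates is a rational multiple of π, converging to x ∈ ℝ^m, and suppose that for every i and every j ∈ {1, …, s}, P_j(e^{i·x^{(i)}₁}, …, e^{i·x^{(i)}_m}) = 0. Then there exist an m×m integer matrix A, a vector ℓ ∈ ℝ^m all of whose coordinates are rational multiples of π, and a point z₀ ∈ ℝ^m, such that x ≡ A·z₀ + ℓ componentwise modulo 2π, and for every z ∈ ℝ^m and every j, P_j(e^{i(A·z + ℓ)₁}, …, e^{i(A·z + ℓ)_m}) = 0. -/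
/-!
The normalized trace of a root of unity of order `n` is `μ(n) / φ(n)`, which tends to `0` as
`n → ∞`. Extending the trace by a linear functional gives `ℚ`-linear functionals `Λ` on any field
of characteristic zero with `Λ Y = 1` for a prescribed `Y ≠ 0` and `Λ (p * z) → 0` as `z` leaves
every finite set of roots of unity.

In a vanishing sum of monomials evaluated at torsion points tending to a limit, pass to an
ultrafilter and group together the monomials whose ratio is eventually constant. Dividing by one
monomial of a group, the ratios in the group freeze at their limits and the other ratios, being
convergent but not eventually constant, leave every finite set; applying `Λ` shows that each group
vanishes at the limit. Ratios inside a group are roots of unity, so these vanishing conditions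
persist at every point with the same values on those characters that are roots of unity at the
limit. For a limit `x` in exponential coordinates these are the integral combinations of the `x t`
lying in `ℚ π`, and they hold on a whole affine family `A z + ℓ` through `x`, where the columns of
`A` are obtained by clearing denominators in coordinates on the span of the `x t` modulo `ℚ π`.
-/

open Filter Topology Polynomial
open scoped ArithmeticFunction.Moebius

section Cyclotomic

theorem sum_divisors_nextCoeff_cyclotomic (R : Type*) [CommRing R] [Nontrivial R] {n : ℕ}
    (hn : 0 < n) :
    ∑ d ∈ n.divisors, (cyclotomic d R).nextCoeff = if n = 1 then -1 else 0 := by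
  rw [← Monic.nextCoeff_prod _ _ fun d _ ↦ cyclotomic.monic d R,
    prod_cyclotomic_eq_X_pow_sub_one hn]
  have hdeg : (X ^ n - 1 : R[X]).natDegree = n := by
    simpa using natDegree_X_pow_sub_C (R := R) (n := n) (r := 1)
  rw [nextCoeff, hdeg, if_neg hn.ne']
  obtain rfl | hn1 := eq_or_ne n 1
  · simp
  · have hpred : n - 1 ≠ n := by lia
    have hpred0 : n - 1 ≠ 0 := by lia
    simp [coeff_X_pow, coeff_one, hn1, hpred, hpred0]

theorem nextCoeff_cyclotomic (R : Type*) [CommRing R] [Nontrivial R] (n : ℕ) :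
    (cyclotomic n R).nextCoeff = -(μ n : R) := by
  obtain rfl | hn := Nat.eq_zero_or_pos n
  · simp [nextCoeff]
  have hinv := ArithmeticFunction.sum_eq_iff_sum_mul_moebius_eq.1
    (fun _ ↦ sum_divisors_nextCoeff_cyclotomic R) n hn
  rw [← hinv, Finset.sum_eq_single_of_mem (n, 1) (by simp [hn.ne'])]
  · simp
  · rintro ⟨a, b⟩ hab hne
    have hb : b ≠ 1 := by
      rintro rfl
      exact hne (by simpa using (Nat.mem_divisorsAntidiagonal.1 hab).1)
    simp [hb]

theorem dvd_factorial_pow_of_totient_le {n M : ℕ} (hn : 0 < n) (hM : n.totient ≤ M) :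
    n ∣ (M + 1).factorial ^ (M + 1) := by
  refine (Nat.dvd_iff_prime_pow_dvd_dvd _ _).2 fun p k hp hpk ↦ ?_
  obtain rfl | hk := Nat.eq_zero_or_pos k
  · simp
  have hφ : p ^ (k - 1) * (p - 1) ≤ M := by
    rw [← Nat.totient_prime_pow hp hk]
    exact (Nat.le_of_dvd (Nat.totient_pos.2 hn) (Nat.totient_dvd_of_dvd hpk)).trans hM
  have hp1 : 0 < p - 1 := Nat.sub_pos_of_lt hp.one_lt
  have hpM : p - 1 ≤ M := (Nat.le_mul_of_pos_left _ (pow_pos hp.pos _)).trans hφ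
  have hkM : k - 1 < M :=
    (Nat.lt_pow_self hp.one_lt).trans_le ((Nat.le_mul_of_pos_right _ hp1).trans hφ)
  calc p ^ k ∣ (M + 1).factorial ^ k :=
        pow_dvd_pow_of_dvd (Nat.dvd_factorial hp.pos (by lia)) k
    _ ∣ (M + 1).factorial ^ (M + 1) := pow_dvd_pow _ (by lia)

theorem tendsto_totient_atTop : Tendsto Nat.totient atTop atTop := by
  refine tendsto_atTop.2 fun M ↦ ?_
  filter_upwards [eventually_gt_atTop ((M + 1).factorial ^ (M + 1))] with n hn
  by_contra! hM
  exact hn.not_ge (Nat.le_of_dvd (by positivity)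
    (dvd_factorial_pow_of_totient_le (Nat.zero_lt_of_lt hn) hM.le))

end Cyclotomic

section NormalizedTrace

theorem tendsto_orderOf_torsion_cofinite (R : Type*) [CommRing R] [IsDomain R] :
    Tendsto (fun z : CommMonoid.torsion R ↦ orderOf (z : R)) cofinite atTop := by
  rw [← Nat.cofinite_eq_atTop]
  refine Tendsto.cofinite_of_finite_preimage_singleton fun n ↦ ?_
  refine Set.Finite.of_finite_image ?_ Subtype.val_injective.injOn
  refine (nthRootsFinset n (1 : R)).finite_toSet.subset ?_
  rintro _ ⟨⟨z, hz⟩, rfl, rfl⟩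
  simp [mem_nthRootsFinset (IsOfFinOrder.orderOf_pos hz), pow_orderOf_eq_one]

variable (K : Type*) [Field K] [Algebra ℚ K] [Algebra.IsIntegral ℚ K]

variable {K} in
theorem normalizedTrace_eq_moebius_div_totient {n : ℕ} {ζ : K} (hζ : IsPrimitiveRoot ζ n)
    (hn : 0 < n) : Algebra.normalizedTrace ℚ K ζ = μ n / n.totient := by
  have := algebraRat.charZero K
  have hminpoly : minpoly ℚ ζ = cyclotomic n ℚ := by
    rw [cyclotomic_eq_minpoly_rat hζ hn]
    congr 1
    exact Subsingleton.elim _ _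
  rw [Algebra.normalizedTrace_minpoly, hminpoly, natDegree_cyclotomic, nextCoeff_cyclotomic,
    neg_neg, smul_eq_mul, inv_mul_eq_div]

theorem tendsto_normalizedTrace_torsion :
    Tendsto (fun z : CommMonoid.torsion K ↦ Algebra.normalizedTrace ℚ K z) cofinite (𝓝 0) := by
  have hφ : Tendsto (fun z : CommMonoid.torsion K ↦ ((orderOf (z : K)).totient : ℝ)⁻¹)
      cofinite (𝓝 0) :=
    tendsto_inv_atTop_zero.comp (tendsto_natCast_atTop_atTop.comp
      (tendsto_totient_atTop.comp (tendsto_orderOf_torsion_cofinite K)))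
  refine squeeze_zero_norm (fun z ↦ ?_) hφ
  rw [normalizedTrace_eq_moebius_div_totient (IsPrimitiveRoot.orderOf (z : K))
    (IsOfFinOrder.orderOf_pos z.2), norm_div, div_eq_mul_inv]
  have hμ : ‖(μ (orderOf (z : K)) : ℚ)‖ ≤ 1 := by
    rw [← Rat.norm_cast_real, Real.norm_eq_abs]
    exact_mod_cast ArithmeticFunction.abs_moebius_le_one
  have hnorm : ‖((orderOf (z : K)).totient : ℚ)‖ = (orderOf (z : K)).totient := by
    rw [← Rat.norm_cast_real]
    simp
  rw [hnorm]
  exact mul_le_of_le_one_left (by positivity) hμ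

theorem tendsto_normalizedTrace_mul_torsion
    (hspan : Submodule.span ℚ (CommMonoid.torsion K : Set K) = ⊤) (κ : K) :
    Tendsto (fun z : CommMonoid.torsion K ↦ Algebra.normalizedTrace ℚ K (κ * z))
      cofinite (𝓝 0) := by
  have hκ : κ ∈ Submodule.span ℚ (CommMonoid.torsion K : Set K) := by
    rw [hspan]
    exact Submodule.mem_top
  induction hκ using Submodule.span_induction with
  | mem u hu =>
    have hinj : Function.Injective fun z : CommMonoid.torsion K ↦
        (⟨u, hu⟩ * z : CommMonoid.torsion K) := fun z w h ↦
      Subtype.ext ((IsOfFinOrder.isUnit hu).mul_left_cancel (congrArg Subtype.val h))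
    refine ((tendsto_normalizedTrace_torsion K).comp hinj.tendsto_cofinite).congr fun z ↦ ?_
    rw [Function.comp_apply, Submonoid.coe_mul]
  | zero =>
    simp only [zero_mul, map_zero]
    exact tendsto_const_nhds
  | add a b _ _ ha hb => simpa only [add_mul, map_add, add_zero] using ha.add hb
  | smul q a _ ha =>
    simpa only [smul_mul_assoc, map_smul, smul_eq_mul, mul_zero] using ha.const_mul q

end NormalizedTrace

section TorsionField

variable (L : Type*) [Field L] [CharZero L]

/-- The maximal cyclotomic extension of `ℚ` inside `L`, generated by all roots of unity of `L`. -/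
noncomputable def torsionField : IntermediateField ℚ L :=
  IntermediateField.adjoin ℚ (CommMonoid.torsion L : Set L)

variable {L} in
theorem mem_torsionField {z : L} (hz : z ∈ CommMonoid.torsion L) : z ∈ torsionField L :=
  IntermediateField.subset_adjoin ℚ _ hz

variable {L} in
theorem isIntegral_of_mem_torsion {z : L} (hz : z ∈ CommMonoid.torsion L) : IsIntegral ℚ z :=
  ((IsPrimitiveRoot.orderOf z).isIntegral (IsOfFinOrder.orderOf_pos hz)).tower_top

instance : Algebra.IsIntegral ℚ (torsionField L) :=
  (IntermediateField.isAlgebraic_adjoin fun _ hz ↦ isIntegral_of_mem_torsion hz).isIntegral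

theorem torsionField_toSubmodule : (torsionField L).toSubalgebra.toSubmodule =
    Submodule.span ℚ (CommMonoid.torsion L : Set L) := by
  rw [torsionField, IntermediateField.adjoin_toSubalgebra_of_isAlgebraic
    fun z hz ↦ (isIntegral_of_mem_torsion hz).isAlgebraic, Algebra.adjoin_eq_span,
    Submonoid.closure_eq]

theorem span_torsion_torsionField :
    Submodule.span ℚ (CommMonoid.torsion (torsionField L) : Set (torsionField L)) = ⊤ := by
  have himage : (torsionField L).val '' CommMonoid.torsion (torsionField L) =
      (CommMonoid.torsion L : Set L) := by
    ext z
    constructor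
    · rintro ⟨w, hw, rfl⟩
      exact (torsionField L).val.toMonoidHom.isOfFinOrder hw
    · intro hz
      exact ⟨⟨z, mem_torsionField hz⟩, Submonoid.isOfFinOrder_coe.1 hz, rfl⟩
  refine Submodule.map_injective_of_injective
    (f := (torsionField L).toSubalgebra.toSubmodule.subtype) Subtype.val_injective ?_
  rw [Submodule.map_span, Submodule.map_subtype_top]
  exact (congrArg (Submodule.span ℚ) himage).trans (torsionField_toSubmodule L).symm

variable {L} in
theorem exists_dual_tendsto_torsion {Y : L} (hY : Y ≠ 0) :
    ∃ Λ : Module.Dual ℚ L, Λ Y = 1 ∧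
      ∀ p : L, Tendsto (fun z : CommMonoid.torsion L ↦ Λ (p * z)) cofinite (𝓝 0) := by
  obtain ⟨f, hfY⟩ := Module.Projective.exists_dual_eq_one (torsionField L) hY
  refine ⟨Algebra.normalizedTrace ℚ (torsionField L) ∘ₗ f.restrictScalars ℚ, ?_, fun p ↦ ?_⟩
  · simpa [hfY] using Algebra.normalizedTrace_algebraMap_apply_eq_self ℚ (torsionField L) 1
  let lift : CommMonoid.torsion L → CommMonoid.torsion (torsionField L) := fun z ↦
    ⟨⟨z, mem_torsionField z.2⟩, Submonoid.isOfFinOrder_coe.1 z.2⟩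
  have hlift : Function.Injective lift := fun z w h ↦ Subtype.ext <|
    congrArg (fun v : CommMonoid.torsion (torsionField L) ↦ ((v : torsionField L) : L)) h
  have hf : ∀ z : CommMonoid.torsion L, f (p * z) = f p * lift z := fun z ↦ by
    rw [mul_comm p, mul_comm (f p)]
    exact f.map_smul (lift z : torsionField L) p
  refine ((tendsto_normalizedTrace_mul_torsion _ (span_torsion_torsionField L) (f p)).comp
    hlift.tendsto_cofinite).congr fun z ↦ ?_
  simp [hf]

end TorsionField

section TorsionSums

theorem isOfFinOrder_div {G : Type*} [DivisionCommMonoid G] {x y : G} (hx : IsOfFinOrder x)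
    (hy : IsOfFinOrder y) : IsOfFinOrder (x / y) := by
  obtain ⟨m, hm, hxm⟩ := isOfFinOrder_iff_pow_eq_one.1 hx
  obtain ⟨n, hn, hyn⟩ := isOfFinOrder_iff_pow_eq_one.1 hy
  refine isOfFinOrder_iff_pow_eq_one.2 ⟨m * n, mul_pos hm hn, ?_⟩
  rw [div_pow, pow_mul, hxm, mul_comm m, pow_mul, hyn, one_pow, one_pow, div_one]

theorem sum_mul_eq_zero_of_eventually_eq_of_tendsto_cofinite {L α ι : Type*} [Field L]
    [CharZero L] {l : Filter α} [l.NeBot] {S T : Finset ι} (hTS : T ⊆ S) {p c : ι → L}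
    {w : ι → α → L} (hw : ∀ b i, IsOfFinOrder (w b i)) (hsum : ∀ i, ∑ b ∈ S, p b * w b i = 0)
    (hconst : ∀ b ∈ T, ∀ᶠ i in l, w b i = c b)
    (hesc : ∀ b ∈ S, b ∉ T → Tendsto (w b) l cofinite) : ∑ b ∈ T, p b * c b = 0 := by
  classical
  by_contra hY
  obtain ⟨Λ, hΛY, hΛ⟩ := exists_dual_tendsto_torsion hY
  have hterm : ∀ b ∈ S, Tendsto (fun i ↦ Λ (p b * w b i)) l
      (𝓝 (if b ∈ T then Λ (p b * c b) else 0)) := fun b hb ↦ by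
    split_ifs with hbT
    · exact tendsto_const_nhds.congr' ((hconst b hbT).mono fun i hi ↦ by simp only [hi])
    · have hesc' : Tendsto (fun i ↦ (⟨w b i, hw b i⟩ : CommMonoid.torsion L)) l
          (comap Subtype.val cofinite) := tendsto_comap_iff.2 (hesc b hb hbT)
      exact (hΛ (p b)).comp (hesc'.mono_right (comap_cofinite_le _))
  have hlim : Tendsto (fun _ : α ↦ (0 : ℚ)) l (𝓝 1) := by
    simpa only [← map_sum, hsum, map_zero, Finset.sum_ite_mem, Finset.inter_eq_right.2 hTS, hΛY]
      using tendsto_finsetSum S hterm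
  exact zero_ne_one (tendsto_nhds_unique tendsto_const_nhds hlim)

theorem eventually_eq_or_tendsto_cofinite {α X : Type*} [TopologicalSpace X] [T1Space X]
    {U : Ultrafilter α} {f : α → X} {a : X} (hf : Tendsto f U (𝓝 a)) :
    (∀ᶠ i in U, f i = a) ∨ Tendsto f U cofinite := by
  refine (Ultrafilter.em U fun i ↦ f i = a).imp_right fun hne ↦ ?_
  exact (tendsto_nhdsWithin_iff.2 ⟨hf, hne⟩).mono_right (nhdsNE_le_cofinite a)

variable {L : Type*} [Field L] [CharZero L] [TopologicalSpace L] [IsTopologicalDivisionRing L]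
  [T2Space L] {α : Type*} {l : Filter α} [l.NeBot]

theorem sum_mul_eq_zero_of_tendsto_torsion {ι : Type*} {S : Finset ι} {p u v : ι → L}
    {w : ι → α → L} (hw : ∀ b i, IsOfFinOrder (w b i)) (hsum : ∀ i, ∑ b ∈ S, p b * w b i = 0)
    (hlim : ∀ b, Tendsto (w b) l (𝓝 (u b))) (hu : ∀ b, u b ≠ 0)
    (hv : ∀ a b, IsOfFinOrder (u b / u a) → v b = u b / u a * v a) :
    ∑ b ∈ S, p b * v b = 0 := by
  classical
  let U := Ultrafilter.of l
  have hw0 : ∀ b i, w b i ≠ 0 := fun b i ↦ (hw b i).isUnit.ne_zero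
  have hratio : ∀ a b i, IsOfFinOrder (w b i / w a i) := fun a b i ↦
    isOfFinOrder_div (hw b i) (hw a i)
  -- Equal germs of `w b / u b` mean that the ratio of the two monomials is eventually constant.
  let g : ι → (U : Filter α).Germ L := fun b ↦ ((fun i ↦ w b i / u b : α → L) : Germ _ L)
  have hg : ∀ a b, g b = g a ↔ ∀ᶠ i in U, w b i / w a i = u b / u a := fun a b ↦ by
    refine Germ.coe_eq.trans (eventually_congr (.of_forall fun i ↦ ?_))
    rw [div_eq_div_iff (hu b) (hu a), div_eq_div_iff (hw0 a i) (hu a), mul_comm (u b)]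
  rw [← Finset.sum_fiberwise_of_maps_to fun b ↦ Finset.mem_image_of_mem g]
  refine Finset.sum_eq_zero fun γ hγ ↦ ?_
  obtain ⟨a, -, rfl⟩ := Finset.mem_image.1 hγ
  have hclass : ∑ b ∈ S with g b = g a, p b * (u b / u a) = 0 := by
    refine sum_mul_eq_zero_of_eventually_eq_of_tendsto_cofinite (l := (U : Filter α))
      (Finset.filter_subset _ S) (fun b ↦ hratio a b) (fun i ↦ ?_)
      (fun b hb ↦ (hg a b).1 (Finset.mem_filter.1 hb).2) fun b hb hbT ↦ ?_
    · simp_rw [← mul_div_assoc]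
      rw [← Finset.sum_div, hsum, zero_div]
    · have hlimU : Tendsto (fun i ↦ w b i / w a i) U (𝓝 (u b / u a)) :=
        ((hlim b).div (hlim a) (hu a)).mono_left (Ultrafilter.of_le l)
      exact (eventually_eq_or_tendsto_cofinite hlimU).resolve_left fun h ↦
        hbT (Finset.mem_filter.2 ⟨hb, (hg a b).2 h⟩)
  have hvclass : ∀ b ∈ S.filter (g · = g a), p b * v b = p b * (u b / u a) * v a := fun b hb ↦ by
    obtain ⟨i, hi⟩ := ((hg a b).1 (Finset.mem_filter.1 hb).2).exists
    rw [mul_assoc, ← hv a b (hi ▸ hratio a b i)]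
  rw [Finset.sum_congr rfl hvclass, ← Finset.sum_mul, hclass, zero_mul]

theorem eval_eq_zero_of_tendsto_torsion {σ : Type*} [Fintype σ] (P : MvPolynomial σ L)
    {ζ : α → σ → L} {ξ η : σ → L} (hζ : ∀ i t, IsOfFinOrder (ζ i t))
    (hlim : Tendsto ζ l (𝓝 ξ)) (hξ : ∀ t, ξ t ≠ 0) (hη : ∀ t, η t ≠ 0)
    (hrel : ∀ k : σ → ℤ, IsOfFinOrder (∏ t, ξ t ^ k t) → ∏ t, η t ^ k t = ∏ t, ξ t ^ k t)
    (hzero : ∀ i, MvPolynomial.eval (ζ i) P = 0) :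
    MvPolynomial.eval η P = 0 := by
  have hdiv : ∀ (z : σ → L), (∀ t, z t ≠ 0) → ∀ a b : σ →₀ ℕ,
      (∏ t, z t ^ b t) / ∏ t, z t ^ a t = ∏ t, z t ^ ((b t : ℤ) - a t) := fun z hz a b ↦ by
    simp only [← Finset.prod_div_distrib, zpow_sub₀ (hz _), zpow_natCast]
  simp only [MvPolynomial.eval_eq'] at hzero ⊢
  refine sum_mul_eq_zero_of_tendsto_torsion (l := l) (w := fun b i ↦ ∏ t, ζ i t ^ b t)
    (u := fun b ↦ ∏ t, ξ t ^ b t)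
    (fun b i ↦ ?_) hzero (fun b ↦ ?_) (fun b ↦ ?_) fun a b hab ↦ ?_
  · exact prod_mem (S := CommMonoid.torsion L) fun t _ ↦ (hζ i t).pow
  · exact tendsto_finsetProd _ fun t _ ↦ (tendsto_pi_nhds.1 hlim t).pow (b t)
  · exact Finset.prod_ne_zero_iff.2 fun t _ ↦ pow_ne_zero _ (hξ t)
  · rw [hdiv ξ hξ] at hab ⊢
    rw [← hrel _ hab, ← hdiv η hη, div_mul_cancel₀]
    exact Finset.prod_ne_zero_iff.2 fun t _ ↦ pow_ne_zero _ (hη t)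

end TorsionSums

section RationalLinearAlgebra

theorem exists_linearMap_sum_smul_eq {K V σ : Type*} [Field K] [AddCommGroup V] [Module K V]
    [Fintype σ] (y : σ → V) :
    ∃ q : V →ₗ[K] σ → K, ∀ v ∈ Submodule.span K (Set.range y), ∑ r, q v r • y r = v := by
  let φ := Fintype.linearCombination K y
  obtain ⟨s, hs⟩ := φ.rangeRestrict.exists_rightInverse_of_surjective φ.range_rangeRestrict
  obtain ⟨q, hq⟩ := s.exists_extend
  refine ⟨q, fun v hv ↦ ?_⟩
  lift v to LinearMap.range φ using by rwa [Fintype.range_linearCombination]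
  have hqv : q v = s v := LinearMap.congr_fun hq v
  have hsv : φ (s v) = v := congrArg Subtype.val (LinearMap.congr_fun hs v)
  rw [hqv, ← hsv, Fintype.linearCombination_apply]

variable {V σ : Type*} [AddCommGroup V] [Module ℚ V] [Fintype σ]

theorem exists_intMatrix_sum_smul_eq (y : σ → V) :
    ∃ A : Matrix σ σ ℤ, (∃ z₀ : σ → V, ∀ t, y t = ∑ r, A t r • z₀ r) ∧
      ∀ k : σ → ℤ, ∑ t, k t • y t = 0 → Matrix.vecMul k A = 0 := by
  obtain ⟨q, hq⟩ := exists_linearMap_sum_smul_eq (K := ℚ) y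
  obtain ⟨N, hN⟩ := IsLocalization.exist_integer_multiples_of_finite (nonZeroDivisors ℤ)
    fun tr : σ × σ ↦ q (y tr.1) tr.2
  choose a ha using hN
  have hN0 : ((N : ℤ) : ℚ) ≠ 0 := Int.cast_ne_zero.2 (nonZeroDivisors.ne_zero N.2)
  have hA : ∀ t r, (a (t, r) : ℚ) = N * q (y t) r := fun t r ↦ by
    simpa using ha (t, r)
  refine ⟨Matrix.of fun t r ↦ a (t, r), ⟨fun r ↦ ((N : ℤ) : ℚ)⁻¹ • y r, fun t ↦ ?_⟩,
    fun k hk ↦ funext fun r ↦ ?_⟩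
  · calc y t = ∑ r, q (y t) r • y r := (hq _ (Submodule.subset_span ⟨t, rfl⟩)).symm
      _ = ∑ r, a (t, r) • ((N : ℤ) : ℚ)⁻¹ • y r := Finset.sum_congr rfl fun r _ ↦ by
        rw [← Int.cast_smul_eq_zsmul ℚ, smul_smul, hA, mul_right_comm, mul_inv_cancel₀ hN0,
          one_mul]
  · have hcast : ((∑ t, k t * a (t, r) : ℤ) : ℚ) = N * q (∑ t, k t • y t) r := by
      simp [hA, Finset.mul_sum, mul_left_comm]
    rw [hk, map_zero, Pi.zero_apply, mul_zero, Int.cast_eq_zero] at hcast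
    exact hcast

theorem exists_intMatrix_affine_of_submodule (W : Submodule ℚ V) (x : σ → V) :
    ∃ (A : Matrix σ σ ℤ) (ℓ : σ → V), (∀ t, ℓ t ∈ W) ∧
      (∃ z₀ : σ → V, ∀ t, x t = ∑ r, A t r • z₀ r + ℓ t) ∧
      ∀ k : σ → ℤ, ∑ t, k t • x t ∈ W → ∀ z : σ → V,
        ∑ t, k t • (∑ r, A t r • z r + ℓ t) = ∑ t, k t • x t := by
  obtain ⟨ρ, hρ⟩ := W.subtype.exists_leftInverse_of_injective W.ker_subtype
  obtain ⟨A, ⟨z₀, hz₀⟩, hA⟩ := exists_intMatrix_sum_smul_eq fun t ↦ x t - ρ (x t)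
  refine ⟨A, fun t ↦ ρ (x t), fun t ↦ (ρ (x t)).2, ⟨z₀, fun t ↦ by rw [← hz₀, sub_add_cancel]⟩,
    fun k hk z ↦ ?_⟩
  have hkℓ : ∑ t, k t • (ρ (x t) : V) = ∑ t, k t • x t := by
    simpa using congrArg Subtype.val (LinearMap.congr_fun hρ ⟨_, hk⟩)
  have hkA : ∑ t, k t • ∑ r, A t r • z r = 0 := by
    have hvecMul := hA k (by simp only [smul_sub, Finset.sum_sub_distrib, hkℓ, sub_self])
    calc ∑ t, k t • ∑ r, A t r • z r = ∑ r, Matrix.vecMul k A r • z r := by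
          simp only [Matrix.vecMul, dotProduct, Finset.sum_smul, Finset.smul_sum, smul_smul]
          exact Finset.sum_comm
      _ = 0 := by simp [hvecMul]
  simp only [smul_add, Finset.sum_add_distrib, hkA, hkℓ, zero_add]

end RationalLinearAlgebra

section Circle

theorem isOfFinOrder_circleExp_iff {θ : ℝ} :
    IsOfFinOrder (Circle.exp θ) ↔ ∃ q : ℚ, θ = q * Real.pi := by
  have := Fact.mk Real.two_pi_pos
  have htoCircle : Circle.exp θ = AddCircle.toCircle (θ : AddCircle (2 * Real.pi)) := by
    simp [AddCircle.toCircle_apply_mk]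
  have h : IsOfFinOrder (Circle.exp θ) ↔
      IsOfFinAddOrder (θ : AddCircle (2 * Real.pi)) := by
    rw [isOfFinOrder_iff_pow_eq_one, isOfFinAddOrder_iff_nsmul_eq_zero, htoCircle]
    refine exists_congr fun n ↦ and_congr_right fun _ ↦ ?_
    rw [← AddCircle.toCircle_nsmul, ← AddCircle.toCircle_zero,
      (AddCircle.injective_toCircle Real.two_pi_pos.ne').eq_iff]
  rw [h, AddCircle.isOfFinAddOrder_iff_exists_rat_eq_div]
  constructor
  · rintro ⟨q, hq⟩
    refine ⟨2 * q, ?_⟩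
    push_cast
    rw [hq]
    field_simp
  · rintro ⟨q, rfl⟩
    refine ⟨q / 2, ?_⟩
    push_cast
    field_simp

theorem isOfFinOrder_coe_circle_iff {z : Circle} : IsOfFinOrder (z : ℂ) ↔ IsOfFinOrder z :=
  Function.Injective.isOfFinOrder_iff (f := Circle.coeHom) Circle.coe_injective

theorem coe_circleExp_eq (θ : ℝ) : (Circle.exp θ : ℂ) = Complex.exp (Complex.I * θ) := by
  rw [Circle.coe_exp, mul_comm]

theorem prod_circleExp_zpow {σ : Type*} [Fintype σ] (x : σ → ℝ) (k : σ → ℤ) :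
    ∏ t, (Circle.exp (x t) : ℂ) ^ k t = Circle.exp (∑ t, k t • x t) := by
  simp only [Circle.coe_exp, ← Complex.exp_int_mul, ← Complex.exp_sum]
  congr 1
  push_cast [zsmul_eq_mul]
  simp only [Finset.sum_mul, mul_assoc]

end Circle

theorem limit_of_rational_zeros_general {σ κ α : Type*} [Fintype σ] (P : κ → MvPolynomial σ ℂ)
    {l : Filter α} [l.NeBot] (X : α → σ → ℝ) (x : σ → ℝ)
    (hrat : ∀ i t, ∃ q : ℚ, X i t = q * Real.pi) (hlim : Tendsto X l (𝓝 x))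
    (hzero : ∀ i j, MvPolynomial.eval (fun t ↦ Complex.exp (Complex.I * X i t)) (P j) = 0) :
    ∃ (A : Matrix σ σ ℤ) (ℓ : σ → ℝ), (∀ t, ∃ q : ℚ, ℓ t = q * Real.pi) ∧
      (∃ z₀ : σ → ℝ, ∀ t, x t = ∑ r, A t r * z₀ r + ℓ t) ∧
      ∀ (z : σ → ℝ) j, MvPolynomial.eval
        (fun t ↦ Complex.exp (Complex.I * (∑ r, A t r * z r + ℓ t : ℝ))) (P j) = 0 := by
  have hmem : ∀ θ : ℝ, θ ∈ Submodule.span ℚ {Real.pi} ↔ ∃ q : ℚ, θ = q * Real.pi := fun θ ↦ by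
    simp only [Submodule.mem_span_singleton, Rat.smul_def, eq_comm]
  obtain ⟨A, ℓ, hℓ, hx, hrel⟩ := exists_intMatrix_affine_of_submodule (Submodule.span ℚ {Real.pi}) x
  simp only [zsmul_eq_mul, hmem] at hℓ hx hrel
  simp only [← coe_circleExp_eq] at hzero ⊢
  refine ⟨A, ℓ, hℓ, hx, fun z j ↦ eval_eq_zero_of_tendsto_torsion (P j)
    (l := l) (ξ := fun t ↦ (Circle.exp (x t) : ℂ)) (fun i t ↦ ?_) (tendsto_pi_nhds.2 fun t ↦ ?_)
    (fun t ↦ Circle.coe_ne_zero _) (fun t ↦ Circle.coe_ne_zero _) (fun k hk ↦ ?_)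
    fun i ↦ hzero i j⟩
  · exact isOfFinOrder_coe_circle_iff.2 (isOfFinOrder_circleExp_iff.2 (hrat i t))
  · have hcont : Continuous fun θ : ℝ ↦ (Circle.exp θ : ℂ) := by fun_prop
    exact (hcont.tendsto _).comp (tendsto_pi_nhds.1 hlim t)
  · rw [prod_circleExp_zpow, isOfFinOrder_coe_circle_iff, isOfFinOrder_circleExp_iff] at hk
    rw [prod_circleExp_zpow, prod_circleExp_zpow]
    simp only [zsmul_eq_mul] at hk ⊢
    rw [hrel k hk z]

theorem limit_of_rational_zeros (m s : ℕ) (hm : 1 ≤ m)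
    (P : Fin s → MvPolynomial (Fin m) ℂ)
    (X : ℕ → (Fin m → ℝ)) (x : Fin m → ℝ)
    (hrat : ∀ (i : ℕ) (j : Fin m), ∃ q : ℚ, X i j = (q : ℝ) * Real.pi)
    (hlim : Filter.Tendsto X Filter.atTop (nhds x))
    (hzero : ∀ (i : ℕ) (j : Fin s),
      MvPolynomial.eval (fun t => Complex.exp (Complex.I * ((X i t : ℝ) : ℂ))) (P j) = 0) :
    ∃ (A : Matrix (Fin m) (Fin m) ℤ) (ℓ : Fin m → ℝ),
      (∀ j : Fin m, ∃ q : ℚ, ℓ j = (q : ℝ) * Real.pi) ∧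
      (∃ z₀ : Fin m → ℝ, ∀ j : Fin m, ∃ c : ℤ,
        x j - ((∑ r : Fin m, (A j r : ℝ) * z₀ r) + ℓ j) = 2 * Real.pi * c) ∧
      (∀ (z : Fin m → ℝ) (j : Fin s),
        MvPolynomial.eval
          (fun t => Complex.exp
            (Complex.I * ((((∑ r : Fin m, (A t r : ℝ) * z r) + ℓ t : ℝ)) : ℂ))) (P j) = 0) := by
  obtain ⟨A, ℓ, hℓ, ⟨z₀, hx⟩, hvanish⟩ := limit_of_rational_zeros_general P X x hrat hlim hzero
  exact ⟨A, ℓ, hℓ, ⟨z₀, fun j ↦ ⟨0, by simp [hx j]⟩⟩, hvanish⟩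
end

section
/- (Laurent's theorem, in the torus formalism of the paper) Let m ≥ 1 and let P₁, …, P_s be polynomials in m variables with complex coefficients. Then there exist finitely many pairs (A_j, ℓ_j), j ∈ J, where each A_j is an m×m integer matrix and each ℓ_j ∈ ℝ^m has all coordinates rational multiples of π, such that: (1) for every j ∈ J, every z ∈ ℝ^m, and every t ∈ {1, …, s}, P_t(e^{i(A_j·z + ℓ_j)₁}, …, e^{i(A_j·z + ℓ_j)_m}) = 0; and (2) for every x ∈ ℝ^m all of whose coordinates are rational multiples of π with P_t(e^{ix₁}, …, e^{ix_m}) = 0 for all t, there exist j ∈ J and z ∈ ℝ^m with all coordinates rational multiples of π such that x ≡ A_j·z + ℓ_j componentwise modulo 2π. -/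
/-!
Write the vanishing of `P` at a torsion point `u` as a relation `∑ α, a_α u ^ α = 0` between roots
of unity. If `e` is prime to the order of `u` and `e ≡ 1` modulo a suitable `N` depending only on
the coefficients, some Galois conjugation fixes all `a_α` and raises every `u ^ α` to the power `e`,
so the relation persists with `(u ^ α) ^ e` in place of `u ^ α`. With `k` the number of coefficients
and `M = N * k!`, such exponents `e` include `k` consecutive terms of a progression of difference
`M`, and inverting a Vandermonde system splits the relation into the fibres of `α ↦ (u ^ α) ^ M`.
Hence `P` vanishes at `u * v` as soon as `v ^ α = v ^ β` whenever `(u ^ α) ^ M = (u ^ β) ^ M`. For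
`u = e ^ (2πi y)` the latter condition says that `M (α - β) · y` is an integer, so only finitely
many patterns of such conditions occur, and the rational points `y` with a given pattern lie on
finitely many translates, modulo `ℤ^m`, of a linear subspace on which all the forms `(α - β) · y`
of the pattern vanish.
-/

namespace LaurentTorus

open Matrix

section Cyclotomic

variable {F K : Type*} [Field F] [Field K] [Algebra F K]

lemma exists_algEquiv_apply_eq_pow (S : Set ℕ) [IsCyclotomicExtension S F K] {n : ℕ}
    [NeZero (n : F)] (hS : n ∈ S) (hirr : Irreducible (Polynomial.cyclotomic n F)) {e : ℕ}
    (he : e.Coprime n) :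
    ∃ σ : Gal(K/F), ∀ ζ : K, ζ ^ n = 1 → σ ζ = ζ ^ e := by
  have : NeZero n := NeZero.of_neZero_natCast F
  have := IsCyclotomicExtension.isGalois S F K
  obtain ⟨μ, hμ⟩ := IsCyclotomicExtension.exists_isPrimitiveRoot F K hS (NeZero.ne n)
  obtain ⟨σ, hσ⟩ : ∃ σ : Gal(K/F), σ μ = μ ^ e := by
    refine minpoly.exists_algEquiv_of_root' (Algebra.IsAlgebraic.isAlgebraic μ) ?_
    rw [← hμ.minpoly_eq_cyclotomic_of_irreducible hirr,
      (hμ.pow_of_coprime e he).minpoly_eq_cyclotomic_of_irreducible hirr, minpoly.aeval]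
  refine ⟨σ, fun ζ hζ => ?_⟩
  obtain ⟨i, -, rfl⟩ := hμ.eq_pow_of_pow_eq_one hζ
  rw [map_pow, hσ, pow_right_comm]

lemma exists_mem_adjoin_rootsOfUnity (S : Set ℕ) [IsCyclotomicExtension S F K] (C : Finset K) :
    ∃ N ≠ 0, ∀ x ∈ C, x ∈ Algebra.adjoin F {ζ : K | ζ ^ N = 1} := by
  have adjoin_mono {M N : ℕ} (h : M ∣ N) :
      Algebra.adjoin F {ζ : K | ζ ^ M = 1} ≤ Algebra.adjoin F {ζ : K | ζ ^ N = 1} :=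
    Algebra.adjoin_mono fun ζ (hζ : ζ ^ M = 1) =>
      orderOf_dvd_iff_pow_eq_one.1 ((orderOf_dvd_of_pow_eq_one hζ).trans h)
  have exists_single (x : K) : ∃ N ≠ 0, x ∈ Algebra.adjoin F {ζ : K | ζ ^ N = 1} := by
    have hx := IsCyclotomicExtension.adjoin_roots (S := S) (A := F) x
    induction hx using Algebra.adjoin_induction with
    | mem ζ hζ =>
      obtain ⟨n, -, hn, hζ⟩ := hζ
      exact ⟨n, hn, Algebra.subset_adjoin hζ⟩
    | algebraMap r => exact ⟨1, one_ne_zero, Subalgebra.algebraMap_mem _ r⟩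
    | add x y _ _ hx hy =>
      obtain ⟨⟨M, hM, hx⟩, N, hN, hy⟩ := And.intro hx hy
      exact ⟨M * N, mul_ne_zero hM hN, add_mem (adjoin_mono (dvd_mul_right M N) hx)
        (adjoin_mono (dvd_mul_left N M) hy)⟩
    | mul x y _ _ hx hy =>
      obtain ⟨⟨M, hM, hx⟩, N, hN, hy⟩ := And.intro hx hy
      exact ⟨M * N, mul_ne_zero hM hN, mul_mem (adjoin_mono (dvd_mul_right M N) hx)
        (adjoin_mono (dvd_mul_left N M) hy)⟩
  choose N hN hmem using exists_single
  exact ⟨∏ x ∈ C, N x, Finset.prod_ne_zero_iff.2 fun x _ => hN x,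
    fun x hx => adjoin_mono (Finset.dvd_prod_of_mem N hx) (hmem x)⟩

end Cyclotomic

section SemilinearExtension

variable {ι K V : Type*} [Semiring K] [AddCommMonoid V] [Module K V]

/-- The `σ`-semilinear endomorphism fixing a basis, i.e. `σ` applied to all coordinates. It stands
in for an extension of a field automorphism `σ` of `K` to an automorphism of an overfield `V`. -/
noncomputable def mapCoords (b : Module.Basis ι K V) (σ : K →+* K) : V →ₛₗ[σ] V :=
  (b.repr.symm : (ι →₀ K) →ₗ[K] V).comp
    ((Finsupp.mapRange.linearMap σ.toSemilinearMap).comp (b.repr : V →ₗ[K] ι →₀ K))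

lemma mapCoords_eq_self {b : Module.Basis ι K V} {σ : K →+* K} {v : V}
    (h : ∀ c ∈ (b.repr v).frange, σ c = c) : mapCoords b σ v = v := by
  have : (b.repr v).mapRange σ (map_zero σ) = b.repr v := by
    ext i
    by_cases hi : b.repr v i = 0
    · simp [hi]
    · exact h _ (Finsupp.mem_frange.2 ⟨hi, i, rfl⟩)
  simpa [mapCoords] using congrArg b.repr.symm this

end SemilinearExtension

lemma exists_addMonoidHom_mul_rootOfUnity_eq {L : Type*} [Field L] [CharZero L] [IsAlgClosed L]
    (A : Finset L) :
    ∃ N ≠ 0, ∀ n ≠ 0, ∀ e : ℕ, e.Coprime n → e ≡ 1 [MOD N] →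
      ∃ f : L →+ L, ∀ a ∈ A, ∀ ζ : L, ζ ^ n = 1 → f (a * ζ) = a * ζ ^ e := by
  classical
  let K := IntermediateField.adjoin ℚ {ζ : L | ∃ n ∈ Set.univ, n ≠ 0 ∧ ζ ^ n = 1}
  have hroots : ∀ n ∈ Set.univ, n ≠ 0 → ∃ ζ : L, IsPrimitiveRoot ζ n := fun n hn h0 =>
    IsCyclotomicExtension.exists_isPrimitiveRoot L L hn h0
  have : IsCyclotomicExtension Set.univ ℚ K :=
    IntermediateField.isCyclotomicExtension_adjoin_of_exists_isPrimitiveRoot _ _ _ hroots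
  let b := Module.Basis.ofVectorSpace K L
  obtain ⟨N, hN, hcoords⟩ := exists_mem_adjoin_rootsOfUnity Set.univ (F := ℚ)
    (A.biUnion fun a => (b.repr a).frange)
  refine ⟨N, hN, fun n hn e hen heN => ?_⟩
  have heN' : e.Coprime N := by simp [Nat.Coprime, heN.gcd_eq]
  have : NeZero ((n * N : ℕ) : ℚ) := ⟨by exact_mod_cast mul_ne_zero hn hN⟩
  obtain ⟨σ, hσ⟩ := exists_algEquiv_apply_eq_pow (K := K) Set.univ (Set.mem_univ (n * N))
    (Polynomial.cyclotomic.irreducible_rat (by positivity)) (hen.mul_right heN')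
  have fix_coords (a) (ha : a ∈ A) : ∀ c ∈ (b.repr a).frange, σ c = c := by
    intro c hc
    refine Algebra.adjoin_le (S := AlgHom.equalizer (σ : K →ₐ[ℚ] K) (AlgHom.id ℚ K)) ?_
      (hcoords c (Finset.mem_biUnion.2 ⟨a, ha, hc⟩))
    intro ζ (hζ : ζ ^ N = 1)
    calc σ ζ = ζ ^ e := hσ ζ (by rw [mul_comm, pow_mul, hζ, one_pow])
      _ = ζ ^ 1 := pow_eq_pow_of_modEq heN hζ
      _ = ζ := pow_one ζ
  refine ⟨(mapCoords b (σ : K →+* K)).toAddMonoidHom, fun a ha ζ hζ => ?_⟩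
  let ξ : K := ⟨ζ, IntermediateField.subset_adjoin ℚ _ ⟨n, trivial, hn, hζ⟩⟩
  have hξ : σ ξ = ξ ^ e := hσ ξ (Subtype.ext (by simp [ξ, pow_mul, hζ]))
  calc mapCoords b (σ : K →+* K) (a * ζ) = mapCoords b (σ : K →+* K) (ξ • a) := by
        rw [mul_comm]; rfl
    _ = σ ξ • a := by rw [map_smulₛₗ, mapCoords_eq_self (fix_coords a ha)]; rfl
    _ = a * ζ ^ e := by rw [hξ, mul_comm]; rfl

lemma sum_fiber_eq_zero_of_forall_sum_mul_pow_eq_zero {ι F : Type*} [Field F] [DecidableEq F]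
    (T : Finset ι) (b χ : ι → F) (h : ∀ s < (T.image χ).card, ∑ i ∈ T, b i * χ i ^ s = 0) (w : F) :
    ∑ i ∈ T with χ i = w, b i = 0 := by
  rcases em' (w ∈ T.image χ) with hw | hw
  · rw [Finset.filter_false_of_mem fun i hi hiw => hw (Finset.mem_image.2 ⟨i, hi, hiw⟩),
      Finset.sum_empty]
  let Q := Lagrange.basis (T.image χ) id w
  have hQw : Q.eval w = 1 := Lagrange.eval_basis_self (Function.injective_id.injOn) hw
  have hQ (i) (hi : i ∈ T) (hiw : χ i ≠ w) : Q.eval (χ i) = 0 :=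
    Lagrange.eval_basis_of_ne (v := id) hiw.symm (Finset.mem_image_of_mem χ hi)
  have hdeg : Q.natDegree < (T.image χ).card := by
    rw [Lagrange.natDegree_basis Function.injective_id.injOn hw]
    exact Nat.sub_one_lt (Finset.card_ne_zero_of_mem hw)
  calc ∑ i ∈ T with χ i = w, b i = ∑ i ∈ T, b i * Q.eval (χ i) := by
        rw [Finset.sum_filter]
        refine Finset.sum_congr rfl fun i hi => ?_
        split_ifs with hiw
        · rw [hiw, hQw, mul_one]
        · rw [hQ i hi hiw, mul_zero]
    _ = ∑ s ∈ Finset.range (T.image χ).card, Q.coeff s * ∑ i ∈ T, b i * χ i ^ s := by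
        simp_rw [Polynomial.eval_eq_sum_range' hdeg, Finset.mul_sum, mul_left_comm]
        exact Finset.sum_comm
    _ = 0 := Finset.sum_eq_zero fun s hs => by rw [h s (Finset.mem_range.1 hs), mul_zero]

lemma exists_forall_coprime_one_add_mul {M n k : ℕ} (hM : M ≠ 0) (hk : k.factorial ∣ M)
    (hn : n ≠ 0) : ∃ t, ∀ s < k, (1 + (t + s) * M).Coprime n := by
  let d := ∏ p ∈ n.primeFactors with ¬ p ∣ M, p
  have hd : d ≠ 0 := Finset.prod_ne_zero_iff.2 fun p hp =>
    (Nat.prime_of_mem_primeFactors (Finset.mem_filter.1 hp).1).ne_zero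
  have hMd : M.Coprime d := Nat.Coprime.prod_right fun p hp =>
    ((Nat.prime_of_mem_primeFactors (Finset.mem_filter.1 hp).1).coprime_iff_not_dvd.2
      (Finset.mem_filter.1 hp).2).symm
  -- Normalise `1 + t * M ≡ M` modulo `d`, so that the progression becomes `M, 2 * M, …, k * M`.
  obtain ⟨t, -, ht⟩ := Nat.exists_mul_mod_eq_of_coprime (M - 1) hMd hd
  refine ⟨t, fun s hs => Nat.coprime_of_dvd fun p hp hpe hpn => ?_⟩
  by_cases hpM : p ∣ M
  · exact hp.one_lt.ne' (Nat.dvd_one.1 ((Nat.dvd_add_left (hpM.mul_left _)).1 hpe))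
  have hpd : p ∣ d := Finset.dvd_prod_of_mem (fun p => p)
    (Finset.mem_filter.2 ⟨Nat.mem_primeFactors.2 ⟨hp, hpn, hn⟩, hpM⟩)
  have hmod : 1 + (t + s) * M ≡ (s + 1) * M [MOD p] :=
    calc 1 + (t + s) * M = M * t + (1 + s * M) := by ring
      _ ≡ (M - 1) + (1 + s * M) [MOD p] := (Nat.ModEq.of_dvd hpd ht).add_right _
      _ = (s + 1) * M := by rw [← add_assoc, Nat.sub_add_cancel (by lia)]; ring
  have hps : p ∣ s + 1 := (hp.dvd_mul.1 ((hmod.dvd_iff dvd_rfl).1 hpe)).resolve_right hpM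
  exact hpM ((hp.dvd_factorial.2 ((Nat.le_of_dvd s.succ_pos hps).trans hs)).trans hk)

lemma exists_pow_fiberwise_sum_eq_zero {L : Type*} [Field L] [CharZero L] [IsAlgClosed L]
    [DecidableEq L] (A : Finset L) (k : ℕ) :
    ∃ M ≠ 0, ∀ {ι : Type*} (T : Finset ι) (a ζ : ι → L), T.card ≤ k → (∀ i ∈ T, a i ∈ A) →
      (∀ i ∈ T, IsOfFinOrder (ζ i)) → ∑ i ∈ T, a i * ζ i = 0 →
        ∀ w, ∑ i ∈ T with ζ i ^ M = w, a i * ζ i = 0 := by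
  obtain ⟨N, hN, hconj⟩ := exists_addMonoidHom_mul_rootOfUnity_eq A
  refine ⟨N * k.factorial, mul_ne_zero hN k.factorial_ne_zero, fun {ι} T a ζ hT ha hζ hsum w => ?_⟩
  set M := N * k.factorial with hM
  let n := ∏ i ∈ T, orderOf (ζ i)
  have hn : n ≠ 0 := Finset.prod_ne_zero_iff.2 fun i hi => (hζ i hi).orderOf_pos.ne'
  have hζn (i) (hi : i ∈ T) : ζ i ^ n = 1 :=
    orderOf_dvd_iff_pow_eq_one.1 (Finset.dvd_prod_of_mem (fun i => orderOf (ζ i)) hi)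
  obtain ⟨t, ht⟩ := exists_forall_coprime_one_add_mul (M := M)
    (mul_ne_zero hN k.factorial_ne_zero) (dvd_mul_left _ _) hn
  have conj_sum (s) (hs : s < k) : ∑ i ∈ T, a i * ζ i * (ζ i ^ M) ^ t * (ζ i ^ M) ^ s = 0 := by
    obtain ⟨f, hf⟩ := hconj n hn _ (ht s hs) (by
      rw [hM, mul_left_comm]; simp [Nat.ModEq])
    calc ∑ i ∈ T, a i * ζ i * (ζ i ^ M) ^ t * (ζ i ^ M) ^ s
        = ∑ i ∈ T, f (a i * ζ i) := Finset.sum_congr rfl fun i hi => by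
          rw [hf _ (ha i hi) _ (hζn i hi)]; ring
      _ = 0 := by rw [← map_sum, hsum, map_zero]
  have hfiber : (∑ i ∈ T with ζ i ^ M = w, a i * ζ i) * w ^ t = 0 := by
    rw [Finset.sum_mul, ← sum_fiber_eq_zero_of_forall_sum_mul_pow_eq_zero T _ _ (fun s hs =>
      conj_sum s (hs.trans_le (Finset.card_image_le.trans hT))) w]
    exact Finset.sum_congr rfl fun i hi => by rw [(Finset.mem_filter.1 hi).2]
  rcases mul_eq_zero.1 hfiber with h | h
  · exact h
  · have hw : w = 0 := eq_zero_of_pow_eq_zero h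
    rw [Finset.filter_false_of_mem, Finset.sum_empty]
    rintro i hi rfl
    exact pow_ne_zero M (hζ i hi).isUnit.ne_zero hw

lemma sum_mul_eq_zero_of_sum_fiber_eq_zero {ι κ R : Type*} [DecidableEq κ]
    [NonUnitalNonAssocSemiring R] {T : Finset ι} {b h : ι → R} {g : ι → κ}
    (hb : ∀ w, ∑ i ∈ T with g i = w, b i = 0)
    (hgh : ∀ i ∈ T, ∀ j ∈ T, g i = g j → h i = h j) : ∑ i ∈ T, b i * h i = 0 := by
  rw [← Finset.sum_fiberwise_of_maps_to fun i hi => Finset.mem_image_of_mem g hi]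
  refine Finset.sum_eq_zero fun w hw => ?_
  obtain ⟨j, hj, rfl⟩ := Finset.mem_image.1 hw
  calc ∑ i ∈ T with g i = g j, b i * h i = (∑ i ∈ T with g i = g j, b i) * h j := by
        rw [Finset.sum_mul]
        refine Finset.sum_congr rfl fun i hi => ?_
        rw [hgh i (Finset.mem_filter.1 hi).1 j hj (Finset.mem_filter.1 hi).2]
    _ = 0 := by rw [hb, zero_mul]

section Characters

variable {σ R : Type*} [CommSemiring R]

/-- The monomial map `u ↦ u ^ α` with multi-index `α`, as a homomorphism of multiplicative
monoids; on the torus it is a character. -/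
def monomialHom (α : σ →₀ ℕ) : (σ → R) →* R where
  toFun u := α.prod fun r k => u r ^ k
  map_one' := by simp
  map_mul' u v := by simp only [Pi.mul_apply, mul_pow, Finsupp.prod_mul]

lemma eval_eq_sum_coeff_mul_monomialHom (P : MvPolynomial σ R) (u : σ → R) :
    P.eval u = ∑ α ∈ P.support, P.coeff α * monomialHom α u :=
  MvPolynomial.eval_eq u P

lemma exists_pow_eval_mul_eq_zero {L : Type*} [Field L] [CharZero L] [IsAlgClosed L]
    (S : Finset (MvPolynomial σ L)) :
    ∃ M ≠ 0, ∀ P ∈ S, ∀ u v : σ → L, IsOfFinOrder u → P.eval u = 0 →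
      (∀ α ∈ P.support, ∀ β ∈ P.support, monomialHom α u ^ M = monomialHom β u ^ M →
        monomialHom α v = monomialHom β v) → P.eval (u * v) = 0 := by
  classical
  obtain ⟨M, hM, hfib⟩ := exists_pow_fiberwise_sum_eq_zero
    (S.biUnion fun P => P.support.image P.coeff) (S.sup fun P => P.support.card)
  refine ⟨M, hM, fun P hP u v hu hPu huv => ?_⟩
  have hfib' := hfib P.support P.coeff (fun α => monomialHom α u)
    (Finset.le_sup (f := fun P : MvPolynomial σ L => P.support.card) hP)
    (fun α hα => Finset.mem_biUnion.2 ⟨P, hP, Finset.mem_image_of_mem _ hα⟩)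
    (fun α _ => (monomialHom α).isOfFinOrder hu)
    (by rw [← eval_eq_sum_coeff_mul_monomialHom, hPu])
  simp_rw [eval_eq_sum_coeff_mul_monomialHom, map_mul, ← mul_assoc]
  exact sum_mul_eq_zero_of_sum_fiber_eq_zero hfib' huv

end Characters

section GeneralizedInverse

variable {m n : Type*} [Fintype m] [Fintype n]

lemma exists_mul_mul_self_eq_self {K : Type*} [Field K] (B : Matrix m n K) :
    ∃ G : Matrix n m K, B * G * B = B := by
  classical
  let f := B.toLin'
  obtain ⟨g₀, hg₀⟩ := f.rangeRestrict.exists_rightInverse_of_surjective f.range_rangeRestrict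
  obtain ⟨g, hg⟩ := g₀.exists_extend
  refine ⟨g.toMatrix', toLin'.injective <| LinearMap.ext fun v => ?_⟩
  have hgf : g (f v) = g₀ (f.rangeRestrict v) := LinearMap.congr_fun hg (f.rangeRestrict v)
  have hfg : f (g₀ (f.rangeRestrict v)) = f v :=
    congrArg Subtype.val (LinearMap.congr_fun hg₀ (f.rangeRestrict v))
  calc toLin' (B * g.toMatrix' * B) v = f (g (f v)) := by simp [f, toLin'_mul]
    _ = f v := by rw [hgf, hfg]

lemma exists_mul_mul_self_eq_smul {R : Type*} [CommRing R] [IsDomain R] (B : Matrix m n R) :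
    ∃ d : R, d ≠ 0 ∧ ∃ H : Matrix n m R, B * H * B = d • B := by
  let φ := algebraMap R (FractionRing R)
  obtain ⟨G, hG⟩ := exists_mul_mul_self_eq_self (B.map φ)
  obtain ⟨d, hd⟩ := IsLocalization.exist_integer_multiples_of_finite (nonZeroDivisors R)
    fun p : n × m => G p.1 p.2
  choose H hH using hd
  refine ⟨d, nonZeroDivisors.coe_ne_zero d, of fun i j => H (i, j),
    map_injective (IsFractionRing.injective R (FractionRing R)) ?_⟩
  have hHG : (of fun i j => H (i, j)).map φ = (d : R) • G := by
    ext i j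
    exact hH (i, j)
  change (B * (of fun i j => H (i, j)) * B).map φ = _
  rw [Matrix.map_mul, Matrix.map_mul, hHG, Matrix.mul_smul, Matrix.smul_mul, hG]
  ext i j
  simp [φ, Algebra.smul_def]

lemma map_smul_one_sub_mul_mulVec {R S : Type*} [CommRing R] [CommRing S] [DecidableEq n]
    (f : R →+* S) (d : R) (B : Matrix m n R) (H : Matrix n m R) {y : n → S} {k : m → R}
    (hk : B.map f *ᵥ y = f ∘ k) : (d • 1 - H * B).map f *ᵥ y = f d • y - f ∘ (H *ᵥ k) := by
  have hmap : (d • (1 : Matrix n n R) - H * B).map f = f d • 1 - H.map f * B.map f := by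
    rw [Matrix.map_sub _ (map_sub f), Matrix.map_mul, Matrix.map_smul' f d _ (map_mul f),
      Matrix.map_one f (map_zero f) (map_one f)]
  have hHk : H.map f *ᵥ (f ∘ k) = f ∘ (H *ᵥ k) := funext fun r => (f.map_mulVec H k r).symm
  rw [hmap, sub_mulVec, smul_mulVec, one_mulVec, ← mulVec_mulVec, hk, hHk]

end GeneralizedInverse

/-- A torsion coset of the torus `(ℝ / 2πℤ)^σ`: the subtorus parametrised by `z ↦ direction * z`,
translated by the torsion point `2π * shift`. -/
structure TorsionCoset (σ : Type*) where
  direction : Matrix σ σ ℤ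
  shift : σ → ℚ

namespace TorsionCoset

variable {σ : Type*} [Fintype σ]

/-- The torsion point `2π y` lies on the coset. -/
def Contains (C : TorsionCoset σ) (y : σ → ℚ) : Prop :=
  ∃ (z : σ → ℚ) (c : σ → ℤ), ∀ r, y r = ∑ u, C.direction r u * z u + C.shift r + c r

/-- The point of the coset with parameter `z`, lifted to `ℝ^σ`. -/
noncomputable def point (C : TorsionCoset σ) (z : σ → ℝ) : σ → ℝ :=
  fun r => ∑ u, C.direction r u * z u + 2 * Real.pi * C.shift r

end TorsionCoset

section Stratification

variable {σ : Type*} [Fintype σ]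

lemma exists_finite_torsionCosets_of_mulVec_integral {ι : Type*} [Finite ι]
    (B : Matrix ι σ ℤ) :
    ∃ 𝒞 : Set (TorsionCoset σ), 𝒞.Finite ∧ (∀ C ∈ 𝒞, B * C.direction = 0) ∧
      ∀ (y : σ → ℚ) (k : ι → ℤ), B.map (Int.cast : ℤ → ℚ) *ᵥ y = Int.cast ∘ k →
        ∃ C ∈ 𝒞, C.Contains y := by
  classical
  have := Fintype.ofFinite ι
  obtain ⟨d, hd, H, hBHB⟩ := exists_mul_mul_self_eq_smul B
  have hd' : (d : ℚ) ≠ 0 := Int.cast_ne_zero.2 hd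
  let coset (ρ : ι → ℤ) : TorsionCoset σ := ⟨d • 1 - H * B, fun r => (H *ᵥ ρ) r / d⟩
  refine ⟨coset '' Set.Icc 0 fun _ => |d|, (Set.finite_Icc _ _).image _, ?_, fun y k hk => ?_⟩
  · rintro _ ⟨ρ, -, rfl⟩
    rw [Matrix.mul_sub, ← Matrix.mul_assoc, hBHB, Matrix.mul_smul, Matrix.mul_one, sub_self]
  let ρ : ι → ℤ := fun i => k i % d
  let q : ι → ℤ := fun i => k i / d
  have hρ : ρ ∈ Set.Icc 0 fun _ => |d| :=
    ⟨fun i => Int.emod_nonneg _ hd, fun i => (Int.emod_lt_abs _ hd).le⟩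
  refine ⟨coset ρ, ⟨ρ, hρ, rfl⟩, (d : ℚ)⁻¹ • y, H *ᵥ q, fun r => ?_⟩
  have hHk : (H *ᵥ k) r = (H *ᵥ ρ) r + d * (H *ᵥ q) r := by
    have hk : k = ρ + d • q := funext fun i => (Int.emod_add_mul_ediv (k i) d).symm
    rw [hk, mulVec_add, mulVec_smul]
    rfl
  have hdy : ∑ u, (coset ρ).direction r u * y u = d * y r - (H *ᵥ k) r :=
    congrFun (map_smul_one_sub_mul_mulVec (Int.castRingHom ℚ) d B H hk) r
  calc y r = (d : ℚ)⁻¹ * (d * y r - (H *ᵥ k) r) + (H *ᵥ ρ) r / d + (H *ᵥ q) r := by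
        rw [hHk]
        push_cast
        field_simp
        ring
    _ = ∑ u, (coset ρ).direction r u * ((d : ℚ)⁻¹ • y) u + (coset ρ).shift r + (H *ᵥ q) r := by
        rw [← hdy, Finset.mul_sum]
        simp only [Pi.smul_apply, smul_eq_mul, mul_left_comm, coset]

lemma exists_finite_torsionCosets_of_finset (D : Finset (σ → ℤ)) :
    ∃ 𝒞 : Set (TorsionCoset σ), 𝒞.Finite ∧ ∀ y : σ → ℚ, ∃ C ∈ 𝒞, C.Contains y ∧
      ∀ b ∈ D, (∃ k : ℤ, ∑ r, b r * y r = k) → b ᵥ* C.direction = 0 := by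
  classical
  choose 𝒞 hfin hdir hcover using fun R : Finset (σ → ℤ) =>
    exists_finite_torsionCosets_of_mulVec_integral (of fun b : R => b.1)
  refine ⟨⋃ R ∈ D.powerset, 𝒞 R, D.powerset.finite_toSet.biUnion fun R _ => hfin R, fun y => ?_⟩
  let R := {b ∈ D | ∃ k : ℤ, ∑ r, b r * y r = k}
  choose k hk using fun b : R => (Finset.mem_filter.1 b.2).2
  obtain ⟨C, hC, hCy⟩ := hcover R y k (funext hk)
  refine ⟨C, Set.mem_biUnion (Finset.mem_powerset.2 (Finset.filter_subset _ _)) hC, hCy,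
    fun b hb hby => ?_⟩
  exact congrFun (hdir R C hC) ⟨b, Finset.mem_filter.2 ⟨hb, hby⟩⟩

end Stratification

section Torus

variable {σ : Type*}

/-- The exponential parametrisation of the compact torus. -/
noncomputable def torusExp (x : σ → ℝ) : σ → ℂ :=
  fun r => Complex.exp (Complex.I * x r)

lemma torusExp_zero : torusExp (0 : σ → ℝ) = 1 := by
  ext r
  simp [torusExp]

lemma torusExp_add (x y : σ → ℝ) : torusExp (x + y) = torusExp x * torusExp y := by
  ext r
  simp [torusExp, mul_add, Complex.exp_add]

lemma torusExp_nsmul (n : ℕ) (x : σ → ℝ) : torusExp (n • x) = torusExp x ^ n := by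
  ext r
  simp [torusExp, ← Complex.exp_nat_mul, mul_left_comm]

lemma exp_I_mul_eq_exp_I_mul_iff {s t : ℝ} :
    Complex.exp (Complex.I * s) = Complex.exp (Complex.I * t) ↔
      ∃ k : ℤ, s - t = 2 * Real.pi * k := by
  rw [Complex.exp_eq_exp_iff_exists_int]
  refine exists_congr fun k => ?_
  have hI : Complex.I * t + k * (2 * Real.pi * Complex.I) = Complex.I * (t + 2 * Real.pi * k) := by
    ring
  rw [hI, mul_right_inj' Complex.I_ne_zero, sub_eq_iff_eq_add']
  norm_cast

lemma torusExp_eq_torusExp_iff {x y : σ → ℝ} :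
    torusExp x = torusExp y ↔ ∀ r, ∃ k : ℤ, x r - y r = 2 * Real.pi * k :=
  funext_iff.trans (forall_congr' fun _ => exp_I_mul_eq_exp_I_mul_iff)

lemma isOfFinOrder_torusExp [Finite σ] (y : σ → ℚ) :
    IsOfFinOrder (torusExp fun r => 2 * Real.pi * y r) := by
  have := Fintype.ofFinite σ
  refine isOfFinOrder_iff_pow_eq_one.2 ⟨∏ r, (y r).den, Finset.prod_pos fun r _ => (y r).pos, ?_⟩
  rw [← torusExp_nsmul, ← torusExp_zero, torusExp_eq_torusExp_iff]
  intro r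
  obtain ⟨e, he⟩ := Finset.dvd_prod_of_mem (fun r => (y r).den) (Finset.mem_univ r)
  refine ⟨e * (y r).num, ?_⟩
  have hy : ((y r).den : ℝ) * y r = (y r).num := by exact_mod_cast Rat.den_mul_eq_num (y r)
  simp only [he, Pi.smul_apply, nsmul_eq_mul, Pi.zero_apply, sub_zero]
  push_cast
  linear_combination 2 * Real.pi * e * hy

variable [Fintype σ]

lemma monomialHom_torusExp (α : σ →₀ ℕ) (x : σ → ℝ) :
    monomialHom α (torusExp x) = Complex.exp (Complex.I * (∑ r, α r * x r : ℝ)) := by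
  calc monomialHom α (torusExp x) = ∏ r, Complex.exp (Complex.I * x r) ^ α r :=
        Finsupp.prod_fintype _ _ fun r => pow_zero _
    _ = _ := by
        simp_rw [← Complex.exp_nat_mul, ← Complex.exp_sum, mul_left_comm _ Complex.I]
        push_cast [Finset.mul_sum]
        rfl

/-- The difference of two exponents, representing the character `u ↦ u ^ α / u ^ β` of the torus. -/
def exponentDiff (α β : σ →₀ ℕ) : σ → ℤ :=
  fun r => α r - β r

lemma monomialHom_torusExp_eq_iff {α β : σ →₀ ℕ} {x : σ → ℝ} :
    monomialHom α (torusExp x) = monomialHom β (torusExp x) ↔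
      ∃ k : ℤ, ∑ r, exponentDiff α β r * x r = 2 * Real.pi * k := by
  simp only [monomialHom_torusExp, exp_I_mul_eq_exp_I_mul_iff, exponentDiff, Int.cast_sub,
    Int.cast_natCast, sub_mul, Finset.sum_sub_distrib]

lemma monomialHom_torusExp_two_pi_mul_pow_eq_iff {α β : σ →₀ ℕ} {y : σ → ℚ} {M : ℕ} :
    monomialHom α (torusExp fun r => 2 * Real.pi * y r) ^ M =
        monomialHom β (torusExp fun r => 2 * Real.pi * y r) ^ M ↔
      ∃ k : ℤ, ∑ r, (M • exponentDiff α β) r * y r = k := by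
  rw [← map_pow, ← map_pow, ← torusExp_nsmul, monomialHom_torusExp_eq_iff]
  refine exists_congr fun k => ?_
  have hsum : ∑ r, exponentDiff α β r * (M • fun r => 2 * Real.pi * y r) r =
      2 * Real.pi * (∑ r, (M • exponentDiff α β) r * y r : ℚ) := by
    push_cast [Finset.mul_sum]
    refine Finset.sum_congr rfl fun r _ => ?_
    simp only [Pi.smul_apply, nsmul_eq_mul, Int.cast_mul, Int.cast_natCast]
    ring
  rw [hsum, mul_right_inj' Real.two_pi_pos.ne']
  norm_cast

lemma monomialHom_torusExp_mulVec_eq {α β : σ →₀ ℕ} {A : Matrix σ σ ℤ}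
    (hA : exponentDiff α β ᵥ* A = 0) (w : σ → ℝ) :
    monomialHom α (torusExp (A.map Int.cast *ᵥ w)) =
      monomialHom β (torusExp (A.map Int.cast *ᵥ w)) := by
  refine monomialHom_torusExp_eq_iff.2 ⟨0, ?_⟩
  have hA' : (Int.cast ∘ exponentDiff α β) ᵥ* A.map (Int.cast : ℤ → ℝ) = 0 := by
    ext r
    simpa [hA] using (RingHom.map_vecMul (Int.castRingHom ℝ) A (exponentDiff α β) r).symm
  calc ∑ r, exponentDiff α β r * (A.map Int.cast *ᵥ w) r
      = (Int.cast ∘ exponentDiff α β) ⬝ᵥ (A.map Int.cast *ᵥ w) := rfl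
    _ = 2 * Real.pi * (0 : ℤ) := by rw [dotProduct_mulVec, hA']; simp

end Torus

namespace TorsionCoset

variable {σ : Type*} [Fintype σ] {C : TorsionCoset σ}

lemma Contains.exists_sub_point_eq {y : σ → ℚ} (hy : C.Contains y) :
    ∃ (z : σ → ℚ) (c : σ → ℤ),
      ∀ r, 2 * Real.pi * y r - C.point (fun u => 2 * Real.pi * z u) r = 2 * Real.pi * c r := by
  obtain ⟨z, c, hy⟩ := hy
  refine ⟨z, c, fun r => ?_⟩
  rw [point, hy]
  push_cast
  simp only [mul_left_comm _ (2 * Real.pi), ← Finset.mul_sum]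
  ring

lemma point_eq_add_mulVec (z w : σ → ℝ) :
    C.point z = C.point w + C.direction.map Int.cast *ᵥ (z - w) := by
  ext r
  rw [mulVec_sub]
  simp only [point, Pi.add_apply, Pi.sub_apply, mulVec, dotProduct, Matrix.map_apply]
  ring

lemma Contains.exists_torusExp_point_eq {y : σ → ℚ} (hy : C.Contains y) (z : σ → ℝ) :
    ∃ w : σ → ℝ, torusExp (C.point z) =
      torusExp (fun r => 2 * Real.pi * y r) * torusExp (C.direction.map Int.cast *ᵥ w) := by
  obtain ⟨z₀, c, hc⟩ := hy.exists_sub_point_eq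
  refine ⟨z - fun u => 2 * Real.pi * z₀ u, ?_⟩
  rw [point_eq_add_mulVec z fun u => 2 * Real.pi * z₀ u, torusExp_add]
  congr 1
  exact (torusExp_eq_torusExp_iff.2 fun r => ⟨c r, hc r⟩).symm

end TorsionCoset

theorem exists_finite_torsionCosets_of_eval_torusExp_eq_zero {σ : Type*} [Fintype σ]
    (S : Finset (MvPolynomial σ ℂ)) :
    ∃ 𝒞 : Set (TorsionCoset σ), 𝒞.Finite ∧
      (∀ C ∈ 𝒞, ∀ z, ∀ P ∈ S, P.eval (torusExp (C.point z)) = 0) ∧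
      ∀ y : σ → ℚ, (∀ P ∈ S, P.eval (torusExp fun r => 2 * Real.pi * y r) = 0) →
        ∃ C ∈ 𝒞, C.Contains y := by
  classical
  obtain ⟨M, hM, heval⟩ := exists_pow_eval_mul_eq_zero S
  let D : Finset (σ → ℤ) := S.biUnion fun P =>
    (P.support ×ˢ P.support).image fun p => M • exponentDiff p.1 p.2
  obtain ⟨𝒞, hfin, hcover⟩ := exists_finite_torsionCosets_of_finset D
  refine ⟨{C ∈ 𝒞 | ∀ z, ∀ P ∈ S, P.eval (torusExp (C.point z)) = 0}, hfin.subset fun C hC => hC.1,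
    fun C hC => hC.2, fun y hy => ?_⟩
  obtain ⟨C, hC, hCy, hdir⟩ := hcover y
  refine ⟨C, ⟨hC, fun z P hP => ?_⟩, hCy⟩
  obtain ⟨w, hw⟩ := hCy.exists_torusExp_point_eq z
  rw [hw]
  refine heval P hP _ _ (isOfFinOrder_torusExp y) (hy P hP) fun α hα β hβ hαβ => ?_
  have hMA : (M • exponentDiff α β) ᵥ* C.direction = 0 :=
    hdir _ (Finset.mem_biUnion.2
      ⟨P, hP, Finset.mem_image.2 ⟨(α, β), Finset.mk_mem_product hα hβ, rfl⟩⟩)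
      (monomialHom_torusExp_two_pi_mul_pow_eq_iff.1 hαβ)
  rw [smul_vecMul] at hMA
  exact monomialHom_torusExp_mulVec_eq ((smul_eq_zero.1 hMA).resolve_left hM) w

end LaurentTorus

theorem laurent_torus (m s : ℕ) (hm : 1 ≤ m)
    (P : Fin s → MvPolynomial (Fin m) ℂ) :
    ∃ (J : ℕ) (A : Fin J → Matrix (Fin m) (Fin m) ℤ) (ℓ : Fin J → (Fin m → ℝ)),
      (∀ (j : Fin J) (r : Fin m), ∃ q : ℚ, ℓ j r = (q : ℝ) * Real.pi) ∧
      (∀ (j : Fin J) (z : Fin m → ℝ) (t : Fin s),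
        MvPolynomial.eval
          (fun r => Complex.exp
            (Complex.I * ((((∑ u : Fin m, (A j r u : ℝ) * z u) + ℓ j r : ℝ)) : ℂ))) (P t) = 0) ∧
      (∀ x : Fin m → ℝ, (∀ r : Fin m, ∃ q : ℚ, x r = (q : ℝ) * Real.pi) →
        (∀ t : Fin s,
          MvPolynomial.eval (fun r => Complex.exp (Complex.I * ((x r : ℝ) : ℂ))) (P t) = 0) →
        ∃ (j : Fin J) (z : Fin m → ℝ),
          (∀ r : Fin m, ∃ q : ℚ, z r = (q : ℝ) * Real.pi) ∧
          ∀ r : Fin m, ∃ c : ℤ,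
            x r - ((∑ u : Fin m, (A j r u : ℝ) * z u) + ℓ j r) = 2 * Real.pi * c) := by
  classical
  obtain ⟨𝒞, hfin, hzero, hcover⟩ :=
    LaurentTorus.exists_finite_torsionCosets_of_eval_torusExp_eq_zero (Finset.univ.image P)
  simp only [Finset.forall_mem_image, Finset.mem_univ, true_imp_iff] at hzero hcover
  obtain ⟨J, C, -, rfl⟩ := hfin.fin_param
  refine ⟨J, fun j => (C j).direction, fun j r => 2 * Real.pi * (C j).shift r,
    fun j r => ⟨2 * (C j).shift r, by push_cast; ring⟩,
    fun j z t => @hzero (C j) ⟨j, rfl⟩ z t, fun x hx hPx => ?_⟩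
  choose q hq using hx
  obtain rfl : x = fun r => 2 * Real.pi * ((q r / 2 : ℚ) : ℝ) := by
    ext r
    rw [hq]
    push_cast
    ring
  obtain ⟨_, ⟨j, rfl⟩, hCx⟩ := hcover (fun r => q r / 2) fun t => hPx t
  obtain ⟨z, c, hzc⟩ := hCx.exists_sub_point_eq
  exact ⟨j, fun r => 2 * Real.pi * z r, fun r => ⟨2 * z r, by push_cast; ring⟩,
    fun r => ⟨c r, hzc r⟩⟩
end
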